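/- arXiv:1005.3900 — 4 statements merged into one kernel-verified Lean document; each statement's English description precedes it below -/
import Mathlib

section
/- Let (A, φ) be an algebraic probability space and let X₁, ..., Xₙ, Y₁, ..., Yₙ ∈ A be such that the ordered pair of (non-unital) subalgebras generated by {X₁, ..., Xₙ} and by {Y₁, ..., Yₙ} is monotone independent. Then φ((X₁+Y₁)(X₂+Y₂)⋯(Xₙ+Yₙ)) = Σ_{V ⊆ {1,...,n}} φ(X_V) · ∏_{j=1}^{p} φ(Y_{V_j}), where V₁, ..., V_p are the gap blocks of V, φ(X_∅) := 1, and the empty product is 1. -/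
/-! The product `(X₁+Y₁)⋯(Xₙ+Yₙ)` expands, by distributivity, into the sum over `V ⊆ {1,…,n}` of
the ordered products of the mixed families `Z_i = X_i` (`i ∈ V`), `Z_i = Y_i` (`i ∉ V`)
(`prod_map_add`), so it suffices to evaluate `φ` on each mixed word.

For fixed `V`, the gap blocks are pairwise disjoint and cover the complement of `V`. The mixed word
restricted to `V ∪ ⋃ G`, for a set `G` of gap blocks, is evaluated by induction on `G`
(`phi_ordProd_gaps`). Adding a block `W = [a, b]` inserts the factor `Y_W` between the letters with
index `< a` and those with index `> b`. By maximality of `W` the neighbouring letters, when they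
exist, are indexed by elements of `V`, hence come from the first algebra. Merging adjacent letters
with equal labels (`exists_alternating`) gives an alternating word in which `Y_W` is a single
letter, and monotone independence extracts the factor `φ(Y_W)` (`MonotoneIndep.extract`). The only
word to which monotone independence does not apply is `Y_W` alone, where `φ 1 = 1` is used. -/

open scoped Classical

/-- The ordered pair of non-unital subalgebras `(A₁, A₂)` of `A` is monotone independent
with respect to the linear functional `φ`: for every alternating word `Z₁ ⋯ Zₙ` (`n ≥ 2`,
encoded as a list of elements together with a label in `Bool`, where `false` means
membership in `A₁` and `true` membership in `A₂`) and every index `i` whose letter lies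
in `A₂`, one has `φ(Z₁⋯Zₙ) = φ(Z_i) · φ(Z₁⋯Z_{i-1}Z_{i+1}⋯Zₙ)`. -/
def MonotoneIndep {A : Type*} [Ring A] [Algebra ℂ A] (φ : A →ₗ[ℂ] ℂ)
    (A₁ A₂ : NonUnitalSubalgebra ℂ A) : Prop :=
  ∀ Z : List (A × Bool), 2 ≤ Z.length →
    Z.Chain' (fun p q => p.2 ≠ q.2) →
    (∀ p ∈ Z, if p.2 then p.1 ∈ A₂ else p.1 ∈ A₁) →
    ∀ i : Fin Z.length, (Z.get i).2 = true →
      φ ((Z.map Prod.fst).prod) =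
        φ (Z.get i).1 * φ (((Z.eraseIdx i).map Prod.fst).prod)

/-- The ordered product `X_V = X_{j₁} ⋯ X_{j_k}` for `V = {j₁ < ⋯ < j_k}`;
for `V = ∅` this is `1`. -/
noncomputable def ordProd {A : Type*} [Ring A] {n : ℕ} (X : Fin n → A)
    (V : Finset (Fin n)) : A :=
  ((V.sort (· ≤ ·)).map X).prod

/-- `W` is a (nonempty) block of interval type in `{1, …, n}`. -/
def IsIntervalBlock {n : ℕ} (W : Finset (Fin n)) : Prop :=
  W.Nonempty ∧ ∃ a b : Fin n, W = Finset.Icc a b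

/-- `W` is a gap block of `V`, i.e. a maximal interval contained in the complement of `V`. -/
def IsGapBlock {n : ℕ} (V W : Finset (Fin n)) : Prop :=
  IsIntervalBlock W ∧ W ⊆ Vᶜ ∧
    ∀ W' : Finset (Fin n), IsIntervalBlock W' → W ⊆ W' → W' ⊆ Vᶜ → W' = W

/-- The finite set of gap blocks of `V ⊆ {1, …, n}`. -/
noncomputable def gapBlocks {n : ℕ} (V : Finset (Fin n)) : Finset (Finset (Fin n)) :=
  Finset.univ.filter (fun W => IsGapBlock V W)

/-! ### Words in two subalgebras -/

section Words

variable {A : Type*} [Ring A] [Algebra ℂ A]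

/-- Any labelled word can be turned into an alternating one by merging adjacent letters with equal
labels; this changes neither the product nor the labels of the first and last letters. -/
lemma exists_alternating (A₁ A₂ : NonUnitalSubalgebra ℂ A) (L : List (A × Bool))
    (hL : ∀ p ∈ L, if p.2 then p.1 ∈ A₂ else p.1 ∈ A₁) :
    ∃ L' : List (A × Bool), L'.IsChain (fun p q => p.2 ≠ q.2) ∧
      (∀ p ∈ L', if p.2 then p.1 ∈ A₂ else p.1 ∈ A₁) ∧
      (L'.map Prod.fst).prod = (L.map Prod.fst).prod ∧
      L'.head?.map Prod.snd = L.head?.map Prod.snd ∧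
      L'.getLast?.map Prod.snd = L.getLast?.map Prod.snd := by
  induction L with
  | nil => exact ⟨[], by simp⟩
  | cons a L ih =>
    obtain ⟨L', hc, hm, hp, hh, hl⟩ := ih fun p hp => hL p (by simp [hp])
    have ha := hL a (by simp)
    cases L' with
    | nil =>
      have : L = [] := by
        cases L with
        | nil => rfl
        | cons c L => simp at hh
      subst this
      exact ⟨[a], by simp, by simpa using ha, by simp, by simp, by simp⟩
    | cons b T =>
      have hl' : (a :: L).getLast?.map Prod.snd = (b :: T).getLast?.map Prod.snd := by
        cases L with
        | nil => simp at hh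
        | cons c L => rw [hl, List.getLast?_cons_cons]
      have hb := hm b (by simp)
      by_cases hab : a.2 = b.2
      · refine ⟨(a.1 * b.1, b.2) :: T, ?_, ?_, ?_, ?_, ?_⟩
        · cases T with
          | nil => simp
          | cons t T => simpa using hc
        · intro p hp
          rcases List.mem_cons.1 hp with rfl | hp
          · rw [hab] at ha
            dsimp only
            split_ifs at ha hb ⊢
            · exact mul_mem ha hb
            · exact mul_mem ha hb
          · exact hm p (by simp [hp])
        · simp [← hp, mul_assoc]
        · simp [hab]
        · rw [hl']
          cases T with
          | nil => simp
          | cons t T => simp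
      · refine ⟨a :: b :: T, ?_, ?_, ?_, ?_, ?_⟩
        · simpa using ⟨hab, hc⟩
        · intro p hp
          rcases List.mem_cons.1 hp with rfl | hp
          · exact ha
          · exact hm p hp
        · rw [List.map_cons, List.prod_cons, hp, List.map_cons, List.prod_cons]
        · simp
        · rw [hl', List.getLast?_cons_cons]

/-- A letter `y` of the second algebra whose neighbours (if any) lie in the first algebra can be
extracted from a word, even when the rest of the word is not alternating. -/
lemma MonotoneIndep.extract {φ : A →ₗ[ℂ] ℂ} (hφ : φ 1 = 1) {A₁ A₂ : NonUnitalSubalgebra ℂ A}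
    (h : MonotoneIndep φ A₁ A₂) (L₁ L₂ : List (A × Bool)) (y : A) (hy : y ∈ A₂)
    (h₁ : ∀ p ∈ L₁, if p.2 then p.1 ∈ A₂ else p.1 ∈ A₁)
    (h₂ : ∀ p ∈ L₂, if p.2 then p.1 ∈ A₂ else p.1 ∈ A₁)
    (hl : ∀ p ∈ L₁.getLast?, p.2 = false) (hr : ∀ p ∈ L₂.head?, p.2 = false) :
    φ ((L₁.map Prod.fst).prod * (y * (L₂.map Prod.fst).prod)) =
      φ y * φ ((L₁.map Prod.fst).prod * (L₂.map Prod.fst).prod) := by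
  obtain ⟨M₁, hc₁, hm₁, hp₁, -, hl₁⟩ := exists_alternating A₁ A₂ L₁ h₁
  obtain ⟨M₂, hc₂, hm₂, hp₂, hh₂, -⟩ := exists_alternating A₁ A₂ L₂ h₂
  rw [← hp₁, ← hp₂]
  have hl' : ∀ p ∈ M₁.getLast?, p.2 = false := by
    intro p hp
    rw [Option.mem_def.1 hp] at hl₁
    obtain ⟨q, hq, hqp⟩ := Option.map_eq_some_iff.1 hl₁.symm
    rw [← hqp]; exact hl q hq
  have hr' : ∀ p ∈ M₂.head?, p.2 = false := by
    intro p hp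
    rw [Option.mem_def.1 hp] at hh₂
    obtain ⟨q, hq, hqp⟩ := Option.map_eq_some_iff.1 hh₂.symm
    rw [← hqp]; exact hr q hq
  by_cases hlen : M₁ = [] ∧ M₂ = []
  · simp [hlen.1, hlen.2, hφ]
  have key := h (M₁ ++ (y, true) :: M₂) (by
      rcases M₁ with _ | ⟨_, _⟩ <;> rcases M₂ with _ | ⟨_, _⟩ <;>
        simp at hlen ⊢
      omega)
    (by
      change List.IsChain _ _
      rw [List.isChain_append]
      refine ⟨hc₁, ?_, ?_⟩
      · rw [List.isChain_cons]
        exact ⟨fun q hq => by simp [hr' q hq], hc₂⟩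
      · intro p hp q hq
        simp only [List.head?_cons, Option.mem_def, Option.some.injEq] at hq
        subst hq
        simp [hl' p hp])
    (by
      intro p hp
      rcases List.mem_append.1 hp with hp | hp
      · exact hm₁ p hp
      rcases List.mem_cons.1 hp with rfl | hp
      · simpa using hy
      · exact hm₂ p hp)
    ⟨M₁.length, by simp⟩ (by simp)
  simpa [List.eraseIdx_append_of_length_le] using key

/-- A nonempty product of generators lies in the generated non-unital subalgebra. -/
lemma list_prod_mem_adjoin {ι : Type*} (Y : ι → A) (l : List ι) (hl : l ≠ []) :
    (l.map Y).prod ∈ NonUnitalAlgebra.adjoin ℂ (Set.range Y) := by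
  induction l with
  | nil => exact absurd rfl hl
  | cons i l ih =>
    have hi : Y i ∈ NonUnitalAlgebra.adjoin ℂ (Set.range Y) :=
      NonUnitalAlgebra.subset_adjoin ℂ ⟨i, rfl⟩
    by_cases h : l = []
    · simpa [h] using hi
    · simpa using mul_mem hi (ih h)

/-- Noncommutative distributivity for an ordered product of sums. -/
lemma prod_map_add {B ι : Type*} [Ring B] [DecidableEq ι] (X Y : ι → B) (l : List ι) (hl : l.Nodup) :
    (l.map fun i => X i + Y i).prod =
      ∑ V ∈ l.toFinset.powerset, (l.map fun i => if i ∈ V then X i else Y i).prod := by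
  induction l with
  | nil => simp
  | cons i l ih =>
    obtain ⟨hi, hl⟩ := List.nodup_cons.1 hl
    rw [List.toFinset_cons, Finset.sum_powerset_insert (by simpa using hi), List.map_cons,
      List.prod_cons, ih hl, add_mul, add_comm, Finset.mul_sum, Finset.mul_sum]
    congr 1
    · refine Finset.sum_congr rfl fun V hV => ?_
      have : i ∉ V := fun h => hi (by simpa using Finset.mem_powerset.1 hV h)
      simp [this]
    · refine Finset.sum_congr rfl fun V hV => ?_
      rw [List.map_cons, List.prod_cons, if_pos (Finset.mem_insert_self _ _)]
      congr 2
      refine List.map_congr_left fun j hj => ?_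
      have : j ≠ i := fun h => hi (h ▸ hj)
      simp [this]

end Words

/-! ### Ordered products over finite sets of indices -/

section OrdProd

variable {A : Type*} [Ring A] {n : ℕ}

lemma sort_union {S T : Finset (Fin n)} (h : ∀ i ∈ S, ∀ j ∈ T, i < j) :
    (S ∪ T).sort (· ≤ ·) = S.sort (· ≤ ·) ++ T.sort (· ≤ ·) := by
  have hn : (S.sort (· ≤ ·) ++ T.sort (· ≤ ·)).Nodup := by
    refine List.nodup_append.2 ⟨S.sort_nodup _, T.sort_nodup _, ?_⟩
    intro i hi j hj
    exact (h i (by simpa using hi) j (by simpa using hj)).ne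
  have hp : (S.sort (· ≤ ·) ++ T.sort (· ≤ ·)).Pairwise (· ≤ ·) := by
    refine List.pairwise_append.2 ⟨S.pairwise_sort _, T.pairwise_sort _, ?_⟩
    intro i hi j hj
    exact (h i (by simpa using hi) j (by simpa using hj)).le
  have := (List.toFinset_sort (· ≤ ·) hn).2 hp
  rw [← this]
  congr 1
  ext i; simp

lemma ordProd_union (Z : Fin n → A) {S T : Finset (Fin n)} (h : ∀ i ∈ S, ∀ j ∈ T, i < j) :
    ordProd Z (S ∪ T) = ordProd Z S * ordProd Z T := by
  simp [ordProd, sort_union h]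

lemma ordProd_congr {Z Z' : Fin n → A} {S : Finset (Fin n)} (h : ∀ i ∈ S, Z i = Z' i) :
    ordProd Z S = ordProd Z' S := by
  unfold ordProd
  congr 1
  exact List.map_congr_left fun i hi => h i (by simpa using hi)

lemma le_of_mem_getLast?_sort {S : Finset (Fin n)} {i : Fin n}
    (hi : i ∈ (S.sort (· ≤ ·)).getLast?) : i ∈ S ∧ ∀ j ∈ S, j ≤ i := by
  have hs := S.pairwise_sort (· ≤ ·)
  obtain ⟨l, hl⟩ := List.mem_getLast?_eq_getLast hi |> fun ⟨h, e⟩ =>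
    (⟨_, e ▸ (List.dropLast_append_getLast h).symm⟩ : ∃ l, S.sort (· ≤ ·) = l ++ [i])
  have hm : ∀ j, j ∈ S ↔ j ∈ l ++ [i] := fun j => by rw [← hl]; simp
  rw [hl, List.pairwise_append] at hs
  refine ⟨(hm i).2 (by simp), fun j hj => ?_⟩
  rcases List.mem_append.1 ((hm j).1 hj) with h | h
  · exact hs.2.2 j h i (by simp)
  · simp at h; exact h.le

lemma le_of_mem_head?_sort {S : Finset (Fin n)} {i : Fin n}
    (hi : i ∈ (S.sort (· ≤ ·)).head?) : i ∈ S ∧ ∀ j ∈ S, i ≤ j := by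
  have hs := S.pairwise_sort (· ≤ ·)
  obtain ⟨l, hl⟩ : ∃ l, S.sort (· ≤ ·) = i :: l := List.head?_eq_some_iff.1 hi
  have hm : ∀ j, j ∈ S ↔ j ∈ i :: l := fun j => by rw [← hl]; simp
  rw [hl, List.pairwise_cons] at hs
  refine ⟨(hm i).2 (by simp), fun j hj => ?_⟩
  rcases List.mem_cons.1 ((hm j).1 hj) with h | h
  · exact h.ge
  · exact hs.1 j h

end OrdProd

/-! ### Gap blocks -/

section Gaps

variable {n : ℕ} {V W W' : Finset (Fin n)}

/-- A gap block is an interval in the complement of `V` whose two outer neighbours, when they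
exist, belong to `V`. -/
lemma IsGapBlock.exists_eq_Icc (h : IsGapBlock V W) :
    ∃ a b : Fin n, a ≤ b ∧ W = Finset.Icc a b ∧
      (∀ c : Fin n, c.val + 1 = a.val → c ∈ V) ∧ (∀ c : Fin n, c.val = b.val + 1 → c ∈ V) := by
  obtain ⟨⟨hne, a, b, rfl⟩, hV, hmax⟩ := h
  have hab : a ≤ b := Finset.nonempty_Icc.1 hne
  refine ⟨a, b, hab, rfl, fun c hc => ?_, fun c hc => ?_⟩
  · by_contra hcV
    have hcb : c ≤ b := by rw [Fin.le_def] at *; omega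
    have := hmax (Finset.Icc c b) ⟨Finset.nonempty_Icc.2 hcb, c, b, rfl⟩
      (Finset.Icc_subset_Icc (by rw [Fin.le_def]; omega) le_rfl) (by
        intro i hi
        by_cases hic : i = c
        · simpa [hic] using hcV
        · refine hV ?_
          rw [Finset.mem_Icc] at hi ⊢
          refine ⟨?_, hi.2⟩
          have := Fin.val_ne_of_ne hic
          have := Fin.le_def.1 hi.1
          rw [Fin.le_def]; omega)
    have hmem : c ∈ Finset.Icc a b := this ▸ Finset.mem_Icc.2 ⟨le_rfl, hcb⟩
    have := Fin.le_def.1 (Finset.mem_Icc.1 hmem).1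
    omega
  · by_contra hcV
    have hac : a ≤ c := by rw [Fin.le_def] at *; omega
    have := hmax (Finset.Icc a c) ⟨Finset.nonempty_Icc.2 hac, a, c, rfl⟩
      (Finset.Icc_subset_Icc le_rfl (by rw [Fin.le_def]; omega)) (by
        intro i hi
        by_cases hic : i = c
        · simpa [hic] using hcV
        · refine hV ?_
          rw [Finset.mem_Icc] at hi ⊢
          refine ⟨hi.1, ?_⟩
          have := Fin.val_ne_of_ne hic
          have := Fin.le_def.1 hi.2
          rw [Fin.le_def]; omega)
    have hmem : c ∈ Finset.Icc a b := this ▸ Finset.mem_Icc.2 ⟨hac, le_rfl⟩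
    have := Fin.le_def.1 (Finset.mem_Icc.1 hmem).2
    omega

/-- Two overlapping gap blocks agree: their union is again an interval. -/
lemma IsGapBlock.eq_of_mem (h : IsGapBlock V W) (h' : IsGapBlock V W') {i : Fin n}
    (hi : i ∈ W) (hi' : i ∈ W') : W = W' := by
  obtain ⟨⟨hne, a, b, rfl⟩, hV, hmax⟩ := h
  obtain ⟨⟨hne', a', b', rfl⟩, hV', hmax'⟩ := h'
  rw [Finset.mem_Icc] at hi hi'
  have hI : IsIntervalBlock (Finset.Icc (min a a') (max b b')) :=
    ⟨⟨i, by simp [hi.1, hi.2]⟩, _, _, rfl⟩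
  have hsub : Finset.Icc (min a a') (max b b') ⊆ Vᶜ := by
    intro j hj
    rw [Finset.mem_Icc] at hj
    by_cases hj1 : j ∈ Finset.Icc a b
    · exact hV hj1
    · refine hV' ?_
      rw [Finset.mem_Icc] at hj1 ⊢
      grind
  rw [← hmax _ hI (Finset.Icc_subset_Icc (min_le_left _ _) (le_max_left _ _)) hsub,
    ← hmax' _ hI (Finset.Icc_subset_Icc (min_le_right _ _) (le_max_right _ _)) hsub]

lemma exists_gapBlock_of_notMem {i : Fin n} (hi : i ∉ V) : ∃ W, IsGapBlock V W ∧ i ∈ W := by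
  obtain ⟨W, hle, hW⟩ :=
    (Set.toFinite {W : Finset (Fin n) | IsIntervalBlock W ∧ W ⊆ Vᶜ}).exists_le_maximal (a := {i})
      ⟨⟨⟨i, by simp⟩, i, i, by simp⟩, by simpa using hi⟩
  refine ⟨W, ⟨hW.prop.1, hW.prop.2, fun W' h1 h2 h3 => ?_⟩, hle (by simp)⟩
  exact le_antisymm (hW.le_of_ge ⟨h1, h3⟩ h2) h2

lemma union_gapBlocks (V : Finset (Fin n)) : V ∪ (gapBlocks V).biUnion id = Finset.univ := by
  ext i
  simp only [Finset.mem_union, Finset.mem_biUnion, id, Finset.mem_univ, iff_true, gapBlocks,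
    Finset.mem_filter, true_and]
  by_cases hi : i ∈ V
  · exact Or.inl hi
  · exact Or.inr (exists_gapBlock_of_notMem hi)

end Gaps

/-! ### Evaluation of mixed words -/

section Mixed

variable {A : Type*} [Ring A] [Algebra ℂ A] {φ : A →ₗ[ℂ] ℂ} {n : ℕ} {X Y : Fin n → A}

/-- Inserting a gap block `W` of `V` into a mixed word whose index set contains `V` and is disjoint
from `W` multiplies its expectation by `φ(Y_W)`. -/
lemma phi_ordProd_union_gap (hφ : φ 1 = 1)
    (h : MonotoneIndep φ (NonUnitalAlgebra.adjoin ℂ (Set.range X))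
      (NonUnitalAlgebra.adjoin ℂ (Set.range Y)))
    {V W S : Finset (Fin n)} (hW : IsGapBlock V W) (hVS : V ⊆ S) (hWS : ∀ i ∈ W, i ∉ S) :
    φ (ordProd (fun i => if i ∈ V then X i else Y i) (W ∪ S)) =
      φ (ordProd Y W) * φ (ordProd (fun i => if i ∈ V then X i else Y i) S) := by
  set Z : Fin n → A := fun i => if i ∈ V then X i else Y i with hZ
  have hWV : W ⊆ Vᶜ := hW.2.1
  obtain ⟨a, b, hab, rfl, hpre, hsuc⟩ := hW.exists_eq_Icc
  set S₁ := S.filter (· < a) with hS₁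
  set S₂ := S.filter (b < ·) with hS₂
  have hS : S = S₁ ∪ S₂ := by
    ext i
    have := hWS i
    simp only [Finset.mem_Icc] at this
    simp only [hS₁, hS₂, Finset.mem_union, Finset.mem_filter]
    grind
  have hWS' : Finset.Icc a b ∪ S = S₁ ∪ (Finset.Icc a b ∪ S₂) := by
    conv_lhs => rw [hS]
    exact Finset.union_left_comm _ _ _
  have hYW : ordProd Z (Finset.Icc a b) = ordProd Y (Finset.Icc a b) :=
    ordProd_congr fun i hi => if_neg (by simpa using hWV hi)
  have e₁ : ordProd Z (Finset.Icc a b ∪ S) =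
      ordProd Z S₁ * (ordProd Y (Finset.Icc a b) * ordProd Z S₂) := by
    rw [hWS', ordProd_union, ordProd_union, hYW]
    · intro i hi j hj
      exact (Finset.mem_Icc.1 hi).2.trans_lt (Finset.mem_filter.1 hj).2
    · intro i hi j hj
      refine (Finset.mem_filter.1 hi).2.trans_le ?_
      rcases Finset.mem_union.1 hj with hj | hj
      · exact (Finset.mem_Icc.1 hj).1
      · exact hab.trans (Finset.mem_filter.1 hj).2.le
  have e₂ : ordProd Z S = ordProd Z S₁ * ordProd Z S₂ := by
    conv_lhs => rw [hS]
    refine ordProd_union Z fun i hi j hj => ?_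
    exact (Finset.mem_filter.1 hi).2.trans (hab.trans_lt (Finset.mem_filter.1 hj).2)
  -- The label of the letter `Z i` is `true` exactly when it comes from the second algebra.
  let lab : Fin n → A × Bool := fun i => (Z i, !decide (i ∈ V))
  have hfst : ∀ T : Finset (Fin n),
      (((T.sort (· ≤ ·)).map lab).map Prod.fst).prod = ordProd Z T := by
    intro T
    rw [List.map_map]; rfl
  have hmem : ∀ l : List (Fin n), ∀ p ∈ l.map lab,
      if p.2 then p.1 ∈ NonUnitalAlgebra.adjoin ℂ (Set.range Y)
        else p.1 ∈ NonUnitalAlgebra.adjoin ℂ (Set.range X) := by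
    intro l p hp
    obtain ⟨i, -, rfl⟩ := List.mem_map.1 hp
    by_cases hi : i ∈ V
    · simpa [lab, hZ, hi] using NonUnitalAlgebra.subset_adjoin ℂ (Set.mem_range_self i)
    · simpa [lab, hZ, hi] using NonUnitalAlgebra.subset_adjoin ℂ (Set.mem_range_self i)
  have key := h.extract hφ ((S₁.sort (· ≤ ·)).map lab) ((S₂.sort (· ≤ ·)).map lab)
    (ordProd Y (Finset.Icc a b))
    (list_prod_mem_adjoin Y _ (by
      intro h0
      have : a ∈ (Finset.Icc a b).sort (· ≤ ·) := by simpa using hab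
      simp [h0] at this))
    (hmem _) (hmem _)
    (by
      intro p hp
      rw [List.getLast?_map, Option.mem_def, Option.map_eq_some_iff] at hp
      obtain ⟨i, hi, rfl⟩ := hp
      obtain ⟨hiS, hmax⟩ := le_of_mem_getLast?_sort hi
      have hia := Fin.lt_def.1 (Finset.mem_filter.1 hiS).2
      -- The last index before `W` is the left neighbour of `W`, which is in `V ⊆ S`.
      have hcV := hpre ⟨a.val - 1, by omega⟩ (by simp; omega)
      have hle := hmax ⟨a.val - 1, by omega⟩
        (Finset.mem_filter.2 ⟨hVS hcV, by rw [Fin.lt_def]; simp; omega⟩)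
      have hiV : i ∈ V := by
        convert hcV
        rw [Fin.le_def] at hle
        simp at hle ⊢; omega
      simp [lab, hiV])
    (by
      intro p hp
      rw [List.head?_map, Option.mem_def, Option.map_eq_some_iff] at hp
      obtain ⟨i, hi, rfl⟩ := hp
      obtain ⟨hiS, hmin⟩ := le_of_mem_head?_sort hi
      have hib := Fin.lt_def.1 (Finset.mem_filter.1 hiS).2
      have hcV := hsuc ⟨b.val + 1, by omega⟩ rfl
      have hle := hmin ⟨b.val + 1, by omega⟩
        (Finset.mem_filter.2 ⟨hVS hcV, by rw [Fin.lt_def]; simp⟩)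
      have hiV : i ∈ V := by
        convert hcV
        rw [Fin.le_def] at hle
        simp at hle ⊢; omega
      simp [lab, hiV])
  rw [hfst, hfst] at key
  rw [e₁, e₂, key]

/-- Evaluation of the mixed word over `V` together with any set `G` of gap blocks of `V`. -/
lemma phi_ordProd_gaps (hφ : φ 1 = 1)
    (h : MonotoneIndep φ (NonUnitalAlgebra.adjoin ℂ (Set.range X))
      (NonUnitalAlgebra.adjoin ℂ (Set.range Y)))
    (V : Finset (Fin n)) (G : Finset (Finset (Fin n))) (hG : ∀ W ∈ G, IsGapBlock V W) :
    φ (ordProd (fun i => if i ∈ V then X i else Y i) (V ∪ G.biUnion id)) =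
      φ (ordProd X V) * ∏ W ∈ G, φ (ordProd Y W) := by
  induction G using Finset.induction_on with
  | empty =>
    simp only [Finset.biUnion_empty, Finset.union_empty, Finset.prod_empty, mul_one]
    rw [ordProd_congr fun i hi => if_pos hi]
  | insert W G hWG ih =>
    have hW := hG W (Finset.mem_insert_self _ _)
    rw [Finset.biUnion_insert, id, Finset.union_left_comm,
      phi_ordProd_union_gap hφ h hW Finset.subset_union_left,
      ih fun W' h' => hG W' (Finset.mem_insert_of_mem h'), Finset.prod_insert hWG]
    · ring
    · intro i hi hi'
      rcases Finset.mem_union.1 hi' with hV | hV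
      · exact Finset.mem_compl.1 (hW.2.1 hi) hV
      · obtain ⟨W', hW', hiW'⟩ := Finset.mem_biUnion.1 hV
        have := hW.eq_of_mem (hG W' (Finset.mem_insert_of_mem hW')) hi hiW'
        exact hWG (this ▸ hW')

end Mixed

/-- If the non-unital subalgebras generated by `{X₁, …, Xₙ}` and `{Y₁, …, Yₙ}` are monotone
independent (in this order), then
`φ((X₁+Y₁)⋯(Xₙ+Yₙ)) = Σ_{V ⊆ {1,…,n}} φ(X_V) ∏_j φ(Y_{V_j})`,
where the `V_j` are the gap blocks of `V`. -/
theorem monotone_sum_formula {A : Type*} [Ring A] [Algebra ℂ A]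
    (φ : A →ₗ[ℂ] ℂ) (hφ : φ 1 = 1) {n : ℕ} (X Y : Fin n → A)
    (h : MonotoneIndep φ (NonUnitalAlgebra.adjoin ℂ (Set.range X))
      (NonUnitalAlgebra.adjoin ℂ (Set.range Y))) :
    φ (ordProd (fun i => X i + Y i) Finset.univ) =
      ∑ V : Finset (Fin n), φ (ordProd X V) * ∏ W ∈ gapBlocks V, φ (ordProd Y W) := by
  have hexp : ordProd (fun i => X i + Y i) Finset.univ =
      ∑ V : Finset (Fin n), ordProd (fun i => if i ∈ V then X i else Y i) Finset.univ := by
    unfold ordProd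
    rw [prod_map_add X Y _ (Finset.sort_nodup _ _), Finset.sort_toFinset, Finset.powerset_univ]
  rw [hexp, map_sum]
  refine Finset.sum_congr rfl fun V _ => ?_
  rw [← phi_ordProd_gaps hφ h V (gapBlocks V) fun W hW => (Finset.mem_filter.1 hW).2,
    union_gapBlocks]
end

section
/- For every n ≥ 1: (i) for every monotone partition (V₁, ..., V_r) ∈ M(n), the λ-maximal block V_r is of interval type, i.e. V_r ∈ IB(n), and if r ≥ 2 then the sequence (V₁, ..., V_{r−1}), transported along the unique increasing bijection from {1,...,n} ∖ V_r onto {1, ..., n − |V_r|}, is a monotone partition of {1, ..., n − |V_r|}; (ii) the map f sending (V₁, ..., V_r) with r ≥ 2 to the pair ((V₁, ..., V_{r−1}), V_r) and sending the single-block monotone partition to a distinguished element 1_n is a bijection from M(n) onto (⋃_{k=1}^{n−1} M(n−k) × IB(n,k)) ∪ {1_n}. -/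
/-!
The last block `V` of a monotone partition has nothing nested inside it. If a point outside `V`
lay between two points of `V`, the block of that point would be enclosed between `min V` and
`max V` by non-crossingness, hence nested in `V`; so `V` is an interval
(`MonotonePartition.isIntervalBlock_of_append`).

For the bijection, the inverse map is built first: relabel the blocks of a monotone partition
of `{1, …, n - k}` along the increasing bijection onto the complement of an interval `V` of size
`k`, then append `V` (`MonotonePartition.glue`). An interval crosses no block disjoint from it and
encloses none, so the result is monotone. Relabelling (`Finset.map`) and transport are mutually
inverse on blocks contained in `Vᶜ`, so gluing undoes removal of the last block
(`MonotonePartition.exists_restrict`), and injectivity of gluing comes down to that of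
`Finset.map` and of `List.append`.

Throughout, the order condition is used in the form that no block is nested in a later one, a
`List.Pairwise` statement which is compatible with appending and mapping lists.
-/

/-- `V ≻ W` : the block `V` nests inside the block `W`, i.e. there are `i, j ∈ W` with
`i < k < j` for all `k ∈ V`. -/
def Nests {n : ℕ} (V W : Finset (Fin n)) : Prop :=
  ∃ i ∈ W, ∃ j ∈ W, ∀ k ∈ V, i < k ∧ k < j

/-- A monotone partition `(π, λ)` of `{1, …, n}`, recorded as the sequence
`(V₁, …, V_{|π|})` of the blocks of `π` listed in `λ`-increasing order: the blocks are
nonempty, pairwise disjoint, cover everything, the partition is non-crossing, and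
whenever `V ≻ W` the block `V` comes later in the sequence than `W`. -/
structure MonotonePartition (n : ℕ) where
  blocks : List (Finset (Fin n))
  nonempty : ∀ W ∈ blocks, W.Nonempty
  pairwiseDisjoint : blocks.Pairwise (fun V W => Disjoint V W)
  cover : ∀ i : Fin n, ∃ W ∈ blocks, i ∈ W
  noncrossing : ∀ V ∈ blocks, ∀ W ∈ blocks, ∀ a ∈ V, ∀ b ∈ W, ∀ c ∈ V, ∀ d ∈ W,
    a < b → b < c → c < d → V = W
  nestOrder : ∀ i j : Fin blocks.length,
    Nests (blocks.get i) (blocks.get j) → j < i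

/-- Transport of a block `W ⊆ C ⊆ {1, …, n}` along the unique increasing bijection from
`C` (of cardinality `m`) onto `{1, …, m}`: the element `j` belongs to the transported
block iff the `j`-th element of `C` (in increasing order) belongs to `W`. -/
def transportBlock {n m : ℕ} (C : Finset (Fin n)) (h : C.card = m)
    (W : Finset (Fin n)) : Finset (Fin m) :=
  Finset.univ.filter (fun j => ((C.orderIsoOfFin h j : Fin n)) ∈ W)

/-! ### Nesting, transport and intervals -/

theorem Nests.irrefl {n : ℕ} (V : Finset (Fin n)) : ¬ Nests V V := by
  rintro ⟨i, hi, j, hj, h⟩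
  exact lt_irrefl _ (h i hi).1

theorem nests_map_iff {n m : ℕ} (e : Fin m ↪o Fin n) (A B : Finset (Fin m)) :
    Nests (A.map e.toEmbedding) (B.map e.toEmbedding) ↔ Nests A B := by
  simp [Nests]

theorem nestOrder_iff_pairwise {n : ℕ} (L : List (Finset (Fin n))) :
    (∀ i j : Fin L.length, Nests (L.get i) (L.get j) → j < i) ↔
      L.Pairwise (fun V W => ¬ Nests V W) := by
  rw [List.pairwise_iff_get]
  constructor
  · intro h i j hij hN
    exact absurd (h i j hN) (not_lt.2 hij.le)
  · intro h i j hN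
    rcases lt_trichotomy i j with hij | rfl | hij
    · exact absurd hN (h i j hij)
    · exact absurd hN (Nests.irrefl _)
    · exact hij

theorem mem_transportBlock {n m : ℕ} (C : Finset (Fin n)) (h : C.card = m)
    (W : Finset (Fin n)) (j : Fin m) :
    j ∈ transportBlock C h W ↔ C.orderEmbOfFin h j ∈ W := by
  rw [transportBlock, Finset.mem_filter, Finset.coe_orderIsoOfFin_apply]
  exact and_iff_right (Finset.mem_univ j)

/-- Relabelling along the increasing bijection onto `C` undoes transport of blocks inside `C`. -/
theorem map_transportBlock {n m : ℕ} (C : Finset (Fin n)) (h : C.card = m)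
    (W : Finset (Fin n)) (hW : W ⊆ C) :
    (transportBlock C h W).map (C.orderEmbOfFin h).toEmbedding = W := by
  ext x
  simp only [Finset.mem_map, mem_transportBlock]
  constructor
  · rintro ⟨j, hj, rfl⟩
    exact hj
  · intro hx
    have : x ∈ Set.range (C.orderEmbOfFin h) := by
      rw [Finset.range_orderEmbOfFin]; exact hW hx
    obtain ⟨j, rfl⟩ := this
    exact ⟨j, hx, rfl⟩

theorem IsIntervalBlock.mem_of_lt_of_lt {n : ℕ} {V : Finset (Fin n)} (hV : IsIntervalBlock V)
    {a b c : Fin n} (ha : a ∈ V) (hc : c ∈ V) (hab : a < b) (hbc : b < c) : b ∈ V := by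
  obtain ⟨-, x, y, rfl⟩ := hV
  rw [Finset.mem_Icc] at *
  exact ⟨ha.1.trans hab.le, hbc.le.trans hc.2⟩

namespace MonotonePartition

/-! ### The last block is an interval -/

theorem ext_blocks {n : ℕ} {P Q : MonotonePartition n} (h : P.blocks = Q.blocks) : P = Q := by
  cases P; cases Q; cases h; rfl

theorem blocks_ne_nil {n : ℕ} (hn : 1 ≤ n) (P : MonotonePartition n) : P.blocks ≠ [] := by
  intro h
  obtain ⟨W, hW, -⟩ := P.cover ⟨0, hn⟩
  simp [h] at hW

/-- The last block is an interval: a block filling a gap in it would be nested inside it. -/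
theorem isIntervalBlock_of_append {n : ℕ} (P : MonotonePartition n) {L : List (Finset (Fin n))}
    {V : Finset (Fin n)} (hL : P.blocks = L ++ [V]) : IsIntervalBlock V := by
  have hVP : V ∈ P.blocks := by simp [hL]
  have hne := P.nonempty V hVP
  refine ⟨hne, V.min' hne, V.max' hne, ?_⟩
  ext k
  rw [Finset.mem_Icc]
  refine ⟨fun hk => ⟨V.min'_le k hk, V.le_max' k hk⟩, fun ⟨h1, h2⟩ => ?_⟩
  by_contra hk
  have ha := V.min'_mem hne
  have hb := V.max'_mem hne
  have h1' : V.min' hne < k := lt_of_le_of_ne h1 (by intro h; exact hk (h ▸ ha))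
  have h2' : k < V.max' hne := lt_of_le_of_ne h2 (by intro h; exact hk (h ▸ hb))
  obtain ⟨W, hW, hkW⟩ := P.cover k
  have hWV : W ≠ V := by rintro rfl; exact hk hkW
  have hWL : W ∈ L := by
    rw [hL] at hW
    simpa [hWV] using hW
  have hmem : ∀ w ∈ W, w ∉ V := by
    have := P.pairwiseDisjoint
    rw [hL, List.pairwise_append] at this
    exact fun w hw => Finset.disjoint_left.1 (this.2.2 W hWL V (by simp)) hw
  have hnest : Nests W V := by
    refine ⟨_, ha, _, hb, fun w hw => ⟨?_, ?_⟩⟩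
    · by_contra hlt
      have hlt' : w < V.min' hne :=
        lt_of_le_of_ne (not_lt.1 hlt) (by intro h; exact hmem w hw (h ▸ ha))
      exact hWV (P.noncrossing W hW V hVP w hw _ ha k hkW _ hb hlt' h1' h2')
    · by_contra hlt
      have hlt' : V.max' hne < w :=
        lt_of_le_of_ne (not_lt.1 hlt) (by intro h; exact hmem w hw (h ▸ hb))
      exact hWV (P.noncrossing V hVP W hW _ ha k hkW _ hb w hw h1' h2' hlt').symm
  have := (nestOrder_iff_pairwise _).1 P.nestOrder
  rw [hL, List.pairwise_append] at this
  exact this.2.2 W hWL V (by simp) hnest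

theorem isIntervalBlock_getLast {n : ℕ} (P : MonotonePartition n) (hP : P.blocks ≠ []) :
    IsIntervalBlock (P.blocks.getLast hP) :=
  P.isIntervalBlock_of_append (List.dropLast_append_getLast hP).symm

/-! ### Adding and removing the last block -/

/-- The one-block partition. -/
def single {n : ℕ} (hn : 1 ≤ n) : MonotonePartition n where
  blocks := [Finset.univ]
  nonempty := by
    simp only [List.mem_singleton, forall_eq]
    exact ⟨⟨0, hn⟩, Finset.mem_univ _⟩
  pairwiseDisjoint := by simp
  cover := by simp
  noncrossing := by simp
  nestOrder := (nestOrder_iff_pairwise _).2 (by simp)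

/-- Relabel the blocks of `Q` along the increasing bijection onto the complement of the interval
`V`, and append `V` as the last block. -/
def glue {n m : ℕ} (V : Finset (Fin n)) (hV : IsIntervalBlock V) (h : Vᶜ.card = m)
    (Q : MonotonePartition m) : MonotonePartition n where
  blocks := Q.blocks.map (fun A => A.map (Vᶜ.orderEmbOfFin h).toEmbedding) ++ [V]
  nonempty := by
    intro W hW
    rw [List.mem_append, List.mem_map, List.mem_singleton] at hW
    rcases hW with ⟨A, hA, rfl⟩ | rfl
    · exact (Q.nonempty A hA).map
    · exact hV.1
  pairwiseDisjoint := by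
    rw [List.pairwise_append, List.pairwise_map]
    refine ⟨Q.pairwiseDisjoint.imp fun hAB => (Finset.disjoint_map _).2 hAB, by simp, ?_⟩
    intro W hW U hU
    obtain ⟨A, hA, rfl⟩ := List.mem_map.1 hW
    obtain rfl := List.mem_singleton.1 hU
    rw [Finset.disjoint_left]
    intro x hx
    obtain ⟨j, -, rfl⟩ := Finset.mem_map.1 hx
    exact Finset.mem_compl.1 (Finset.orderEmbOfFin_mem _ h j)
  cover := by
    intro i
    by_cases hi : i ∈ V
    · exact ⟨V, by simp, hi⟩
    · have : i ∈ Set.range (Vᶜ.orderEmbOfFin h) := by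
        rw [Finset.range_orderEmbOfFin]; simpa using hi
      obtain ⟨j, rfl⟩ := this
      obtain ⟨A, hA, hj⟩ := Q.cover j
      exact ⟨_, List.mem_append_left _ (List.mem_map_of_mem hA), Finset.mem_map_of_mem _ hj⟩
  noncrossing := by
    have hnot : ∀ j, Vᶜ.orderEmbOfFin h j ∉ V := fun j =>
      Finset.mem_compl.1 (Finset.orderEmbOfFin_mem _ h j)
    intro W hW U hU a ha b hb c hc d hd hab hbc hcd
    rw [List.mem_append, List.mem_map, List.mem_singleton] at hW hU
    rcases hW with ⟨A, hA, rfl⟩ | rfl <;> rcases hU with ⟨B, hB, rfl⟩ | rfl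
    · obtain ⟨a, ha', rfl⟩ := Finset.mem_map.1 ha
      obtain ⟨b, hb', rfl⟩ := Finset.mem_map.1 hb
      obtain ⟨c, hc', rfl⟩ := Finset.mem_map.1 hc
      obtain ⟨d, hd', rfl⟩ := Finset.mem_map.1 hd
      rw [Q.noncrossing A hA B hB a ha' b hb' c hc' d hd' (by simpa using hab)
        (by simpa using hbc) (by simpa using hcd)]
    · obtain ⟨c, -, rfl⟩ := Finset.mem_map.1 hc
      exact absurd (hV.mem_of_lt_of_lt hb hd hbc hcd) (hnot c)
    · obtain ⟨b, -, rfl⟩ := Finset.mem_map.1 hb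
      exact absurd (hV.mem_of_lt_of_lt ha hc hab hbc) (hnot b)
    · rfl
  nestOrder := by
    rw [nestOrder_iff_pairwise, List.pairwise_append, List.pairwise_map]
    refine ⟨((nestOrder_iff_pairwise _).1 Q.nestOrder).imp fun hAB => ?_, by simp, ?_⟩
    · rwa [nests_map_iff]
    · intro W hW U hU
      obtain ⟨A, hA, rfl⟩ := List.mem_map.1 hW
      obtain rfl := List.mem_singleton.1 hU
      rintro ⟨i, hi, j, hj, hij⟩
      obtain ⟨x, hx⟩ := Q.nonempty A hA
      have hx' := hij _ (Finset.mem_map_of_mem _ hx)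
      exact Finset.mem_compl.1 (Finset.orderEmbOfFin_mem _ h x)
        (hV.mem_of_lt_of_lt hi hj hx'.1 hx'.2)

/-- The monotone partition obtained by removing the last block `V` and transporting the others to
`{1, …, m}`, where `m` is the size of the complement of `V`. -/
def restrict {n m : ℕ} (P : MonotonePartition n) {L : List (Finset (Fin n))}
    {V : Finset (Fin n)} (hL : P.blocks = L ++ [V]) (h : Vᶜ.card = m)
    (hsub : ∀ W ∈ L, W ⊆ Vᶜ) : MonotonePartition m where
  blocks := L.map (transportBlock Vᶜ h)
  nonempty := by
    intro A hA
    obtain ⟨W, hW, rfl⟩ := List.mem_map.1 hA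
    have hne := P.nonempty W (by simp [hL, hW])
    rw [← map_transportBlock Vᶜ h W (hsub W hW)] at hne
    exact Finset.map_nonempty.1 hne
  pairwiseDisjoint := by
    have := P.pairwiseDisjoint
    rw [hL, List.pairwise_append] at this
    rw [List.pairwise_map]
    refine this.1.imp fun hAB => Finset.disjoint_left.2 fun x hx hy => ?_
    rw [mem_transportBlock] at hx hy
    exact Finset.disjoint_left.1 hAB hx hy
  cover := by
    intro i
    obtain ⟨W, hW, hi⟩ := P.cover (Vᶜ.orderEmbOfFin h i)
    rw [hL, List.mem_append, List.mem_singleton] at hW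
    rcases hW with hW | rfl
    · exact ⟨_, List.mem_map_of_mem hW, (mem_transportBlock _ _ _ _).2 hi⟩
    · exact absurd hi (Finset.mem_compl.1 (Finset.orderEmbOfFin_mem _ h i))
  noncrossing := by
    intro A hA B hB a ha b hb c hc d hd hab hbc hcd
    obtain ⟨W, hW, rfl⟩ := List.mem_map.1 hA
    obtain ⟨U, hU, rfl⟩ := List.mem_map.1 hB
    rw [mem_transportBlock] at ha hb hc hd
    rw [P.noncrossing W (by simp [hL, hW]) U (by simp [hL, hU]) _ ha _ hb _ hc _ hd
      (by simpa using hab) (by simpa using hbc) (by simpa using hcd)]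
  nestOrder := by
    have := (nestOrder_iff_pairwise _).1 P.nestOrder
    rw [hL, List.pairwise_append] at this
    rw [nestOrder_iff_pairwise, List.pairwise_map]
    refine this.1.imp_of_mem fun {W U} hW hU hWU => ?_
    rwa [← nests_map_iff (Vᶜ.orderEmbOfFin h), map_transportBlock _ _ _ (hsub W hW),
      map_transportBlock _ _ _ (hsub U hU)]

/-- A partition with at least two blocks is glued from its last block `V`, of size at most
`n - 1`, and the monotone partition obtained by removing `V`. -/
theorem exists_restrict {n : ℕ} (P : MonotonePartition n) (hP : P.blocks ≠ [])
    (h2 : 2 ≤ P.blocks.length)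
    (h : (P.blocks.getLast hP)ᶜ.card = n - (P.blocks.getLast hP).card) :
    (1 ≤ (P.blocks.getLast hP).card ∧ (P.blocks.getLast hP).card ≤ n - 1) ∧
    ∃ Q : MonotonePartition (n - (P.blocks.getLast hP).card),
      Q.blocks = P.blocks.dropLast.map (transportBlock (P.blocks.getLast hP)ᶜ h) ∧
      ∀ hV : IsIntervalBlock (P.blocks.getLast hP), glue _ hV h Q = P := by
  have hL : P.blocks = P.blocks.dropLast ++ [P.blocks.getLast hP] :=
    (List.dropLast_append_getLast hP).symm
  have hlen : P.blocks.dropLast ≠ [] := by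
    intro h0
    have := congrArg List.length h0
    simp at this
    omega
  generalize P.blocks.dropLast = L at *
  generalize P.blocks.getLast hP = V at *
  have hsub : ∀ W ∈ L, W ⊆ Vᶜ := by
    have := P.pairwiseDisjoint
    rw [hL, List.pairwise_append] at this
    intro W hW x hx
    exact Finset.mem_compl.2 (Finset.disjoint_left.1 (this.2.2 W hW V (by simp)) hx)
  have hmap : (L.map (transportBlock Vᶜ h)).map
      (fun A => A.map (Vᶜ.orderEmbOfFin h).toEmbedding) = L := by
    rw [List.map_map]
    exact (List.map_congr_left fun W hW => map_transportBlock Vᶜ h W (hsub W hW)).trans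
      (List.map_id L)
  refine ⟨⟨(P.nonempty V (by simp [hL])).card_pos, ?_⟩, P.restrict hL h hsub, rfl, fun hV => ?_⟩
  -- Another block is nonempty and lies in the complement of `V`, so `V` is not everything.
  · obtain ⟨W, hW⟩ := List.exists_mem_of_ne_nil L hlen
    have hpos := ((P.nonempty W (by simp [hL, hW])).mono (hsub W hW)).card_pos
    omega
  · apply ext_blocks
    rw [hL]
    exact congrArg (· ++ [V]) hmap

theorem eq_single {n : ℕ} (hn : 1 ≤ n) (P : MonotonePartition n) (h1 : P.blocks.length = 1) :
    single hn = P := by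
  obtain ⟨V, hV⟩ := List.length_eq_one_iff.1 h1
  apply ext_blocks
  rw [hV]
  refine congrArg (fun W => [W]) (Finset.ext fun i => ?_)
  obtain ⟨W, hW, hi⟩ := P.cover i
  rw [hV, List.mem_singleton] at hW
  subst hW
  simp [hi]

/-! ### The bijection -/

/-- The inverse of the bijection: glue in a last interval block, or return the one-block
partition at the distinguished element. -/
def assemble {n : ℕ} (hn : 1 ≤ n) :
    ((Σ k : ℕ, MonotonePartition (n - k) ×
      {V : Finset (Fin n) // IsIntervalBlock V ∧ V.card = k ∧ 1 ≤ k ∧ k ≤ n - 1}) ⊕ PUnit) →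
    MonotonePartition n
  | Sum.inl ⟨_, Q, V⟩ =>
      glue V.1 V.2.1 (by rw [Finset.card_compl, V.2.2.1, Fintype.card_fin]) Q
  | Sum.inr _ => single hn

theorem two_le_length_glue {n m : ℕ} (hm : 1 ≤ m) (V : Finset (Fin n)) (hV : IsIntervalBlock V)
    (h : Vᶜ.card = m) (Q : MonotonePartition m) : 2 ≤ (glue V hV h Q).blocks.length := by
  have := List.length_pos_iff.2 (Q.blocks_ne_nil hm)
  simp [glue]
  omega

theorem assemble_injective {n : ℕ} (hn : 1 ≤ n) : Function.Injective (assemble hn) := by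
  rintro (⟨k, Q, V, hV, hk, h1, h2⟩ | ⟨⟩) (⟨k', Q', V', hV', hk', h1', h2'⟩ | ⟨⟩) heq
  · have hb := congrArg blocks heq
    obtain ⟨hQ, hVV⟩ := List.append_inj' hb rfl
    obtain rfl : V = V' := by simpa using hVV
    subst hk
    subst hk'
    have : Q = Q' := ext_blocks ((List.map_injective_iff.2 (Finset.map_injective _)) hQ)
    rw [this]
  -- A glued partition has at least two blocks, so it is not the one-block partition.
  · have := two_le_length_glue (by omega) V hV
      (by rw [Finset.card_compl, hk, Fintype.card_fin]) Q
    rw [show glue V hV _ Q = single hn from heq] at this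
    simp [single] at this
  · have := two_le_length_glue (by omega) V' hV'
      (by rw [Finset.card_compl, hk', Fintype.card_fin]) Q'
    rw [← show single hn = glue V' hV' _ Q' from heq] at this
    simp [single] at this
  · rfl

theorem assemble_surjective {n : ℕ} (hn : 1 ≤ n) : Function.Surjective (assemble hn) := by
  intro P
  have hP := P.blocks_ne_nil hn
  have hpos := List.length_pos_iff.2 hP
  by_cases h1 : P.blocks.length = 1
  · exact ⟨Sum.inr PUnit.unit, eq_single hn P h1⟩
  · obtain ⟨hc, Q, -, hglue⟩ := P.exists_restrict hP (by omega) (by simp [Finset.card_compl])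
    exact ⟨Sum.inl ⟨_, Q, _, P.isIntervalBlock_getLast hP, rfl, hc⟩, hglue (P.isIntervalBlock_getLast hP)⟩

end MonotonePartition

/-- (i) For a monotone partition `(V₁, …, V_r)` of `{1, …, n}` (`n ≥ 1`), the `λ`-maximal
block `V_r` is of interval type, and if `r ≥ 2` then `(V₁, …, V_{r-1})`, transported along
the increasing bijection from `{1,…,n} ∖ V_r` onto `{1, …, n - |V_r|}`, is a monotone
partition of `{1, …, n - |V_r|}`.
(ii) The map sending `(V₁, …, V_r)` with `r ≥ 2` to `((V₁, …, V_{r-1}), V_r)` and sending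
the one-block monotone partition to the distinguished element `1_n` (here `Sum.inr PUnit.unit`)
is a bijection from `M(n)` onto `(⋃_{k=1}^{n-1} M(n-k) × IB(n,k)) ∪ {1_n}`. -/
theorem monotonePartition_last_interval_and_bijection (n : ℕ) (hn : 1 ≤ n) :
    (∀ (P : MonotonePartition n) (hP : P.blocks ≠ []),
      IsIntervalBlock (P.blocks.getLast hP) ∧
      (2 ≤ P.blocks.length →
        ∃ Q : MonotonePartition (n - (P.blocks.getLast hP).card),
          Q.blocks = P.blocks.dropLast.map
            (transportBlock (P.blocks.getLast hP)ᶜ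
              (by simp [Finset.card_compl]))))
    ∧
    ∃ f : MonotonePartition n ≃
        ((Σ k : ℕ, MonotonePartition (n - k) ×
            {V : Finset (Fin n) // IsIntervalBlock V ∧ V.card = k ∧ 1 ≤ k ∧ k ≤ n - 1})
          ⊕ PUnit),
      ∀ (P : MonotonePartition n) (hP : P.blocks ≠ []),
        (P.blocks.length = 1 → f P = Sum.inr PUnit.unit) ∧
        (2 ≤ P.blocks.length →
          ∃ (Q : MonotonePartition (n - (P.blocks.getLast hP).card))
            (hV : IsIntervalBlock (P.blocks.getLast hP) ∧
              (P.blocks.getLast hP).card = (P.blocks.getLast hP).card ∧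
              1 ≤ (P.blocks.getLast hP).card ∧ (P.blocks.getLast hP).card ≤ n - 1),
            Q.blocks = P.blocks.dropLast.map
              (transportBlock (P.blocks.getLast hP)ᶜ
                (by simp [Finset.card_compl])) ∧
            f P = Sum.inl ⟨(P.blocks.getLast hP).card, Q, ⟨P.blocks.getLast hP, hV⟩⟩) := by
  refine ⟨fun P hP => ⟨P.isIntervalBlock_getLast hP, fun h2 => ?_⟩, ?_⟩
  · obtain ⟨-, Q, hQ, -⟩ := P.exists_restrict hP h2 (by simp [Finset.card_compl])
    exact ⟨Q, hQ⟩
  · refine ⟨(Equiv.ofBijective _ ⟨MonotonePartition.assemble_injective hn,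
      MonotonePartition.assemble_surjective hn⟩).symm, fun P hP => ⟨fun h1 => ?_, fun h2 => ?_⟩⟩
    · rw [Equiv.symm_apply_eq]
      exact (MonotonePartition.eq_single hn P h1).symm
    · obtain ⟨hc, Q, hQ, hglue⟩ := P.exists_restrict hP h2 (by simp [Finset.card_compl])
      refine ⟨Q, ⟨P.isIntervalBlock_getLast hP, rfl, hc⟩, hQ, ?_⟩
      rw [Equiv.symm_apply_eq]
      exact (hglue (P.isIntervalBlock_getLast hP)).symm
end

section
/- Let (A, φ) be an algebraic probability space. Then there exists a unique family of multilinear functionals K_n^M : Aⁿ → ℂ (n ≥ 1) such that for every n ≥ 1 and all X₁, ..., Xₙ ∈ A, φ(X₁⋯Xₙ) = Σ_{(π,λ) ∈ M(n)} (1/|π|!) · K_π^M(X₁, ..., Xₙ) (the monotone moment–cumulant formula). -/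
/-!
The partition with a single block contributes exactly `K n X` to the right-hand side, with
coefficient `1 / 1! = 1` (`cumProd_const`), and every other monotone partition of `{1, …, n+1}`
has only blocks of size at most `n`, so that its contribution involves only `K p` with `p < n`
(`cumProd_congr`). Hence the formula is equivalent to the triangular system
`K n X = φ (X₁ ⋯ Xₙ₊₁) - (contribution of the partitions with more than one block)`
(`momentFormula_iff`), which determines the `K n` one after the other. Existence also requires
the right-hand side to be multilinear in `X`: each variable lies in exactly one block, so each
`K_π` is linear in each variable (`cumProd_update`).
-/

open scoped Classical

/-- Encoding of a monotone partition `(π, λ)` of `{1, …, n}` by its labeling function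
`ℓ : Fin n → Fin n`, where `ℓ i` is the (`λ`-increasing) position of the block of `π`
containing `i`. The conditions say: the set of labels used is an initial segment
(so blocks are numbered `0, 1, …, |π| - 1` in `λ`-increasing order), the underlying
partition into fibers is non-crossing, and whenever the block labeled `u` nests inside
the block labeled `v` (i.e. `V_u ≻ V_v`), one has `v < u` (i.e. `V_u >_λ V_v`). -/
def IsMonotoneLabel {n : ℕ} (ℓ : Fin n → Fin n) : Prop :=
  (∀ j k : Fin n, k ≤ j → (∃ i, ℓ i = j) → ∃ i, ℓ i = k) ∧
  (∀ a b c d : Fin n, a < b → b < c → c < d → ℓ a = ℓ c → ℓ b = ℓ d → ℓ a = ℓ b) ∧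
  (∀ u v : Fin n, (∃ i, ℓ i = u) →
    (∃ i j : Fin n, ℓ i = v ∧ ℓ j = v ∧ ∀ k, ℓ k = u → i < k ∧ k < j) → v < u)

/-- The finite set `M(n)` of monotone partitions of `{1, …, n}`, encoded by labeling
functions. -/
noncomputable def monotoneLabels (n : ℕ) : Finset (Fin n → Fin n) :=
  Finset.univ.filter IsMonotoneLabel

/-- The number `|π|` of blocks of the partition encoded by `ℓ`. -/
def numBlocks {n : ℕ} (ℓ : Fin n → Fin n) : ℕ := (Finset.image ℓ Finset.univ).card

/-- The block of the partition encoded by `ℓ` carrying the label `j`. -/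
noncomputable def labelBlock {n : ℕ} (ℓ : Fin n → Fin n) (j : Fin n) : Finset (Fin n) :=
  Finset.univ.filter (fun i => ℓ i = j)

/-- Given a family `K` of multilinear functionals (`K m` being `(m+1)`-linear, so that
`K_p` for `p ≥ 1` corresponds to `K (p-1)`), the quantity `K_{|W|}(X_W)`, i.e. `K_{|W|}`
applied to `(X_j)_{j ∈ W}` in increasing order of `j` (junk value `1` if `W = ∅`). -/
noncomputable def blockApply {A : Type*} [AddCommMonoid A] [Module ℂ A]
    (K : ∀ m : ℕ, MultilinearMap ℂ (fun _ : Fin (m + 1) => A) ℂ)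
    {n : ℕ} (X : Fin n → A) (W : Finset (Fin n)) : ℂ :=
  if h : W.Nonempty then
    K (W.card - 1) (fun j => X (W.orderIsoOfFin rfl
      ⟨(j : ℕ), by have hj := j.isLt; have hc := Finset.card_pos.mpr h; omega⟩))
  else 1

/-- `K_π(X₁, …, Xₙ) = ∏_{V ∈ π} K_{|V|}(X_V)` for the partition `π` encoded by `ℓ`. -/
noncomputable def cumProd {A : Type*} [AddCommMonoid A] [Module ℂ A]
    (K : ∀ m : ℕ, MultilinearMap ℂ (fun _ : Fin (m + 1) => A) ℂ)
    {n : ℕ} (X : Fin n → A) (ℓ : Fin n → Fin n) : ℂ :=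
  ∏ j ∈ Finset.image ℓ Finset.univ, blockApply K X (labelBlock ℓ j)

/-- `φ_t(X₁, …, Xₙ) = Σ_{(π,λ) ∈ M(n)} (t^{|π|}/|π|!) K_π(X₁, …, Xₙ)`, as a polynomial
in the variable `t`. -/
noncomputable def phiPoly {A : Type*} [AddCommMonoid A] [Module ℂ A]
    (K : ∀ m : ℕ, MultilinearMap ℂ (fun _ : Fin (m + 1) => A) ℂ)
    {n : ℕ} (X : Fin n → A) : Polynomial ℂ :=
  ∑ ℓ ∈ monotoneLabels n, Polynomial.C ((Nat.factorial (numBlocks ℓ) : ℂ))⁻¹ *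
    Polynomial.X ^ numBlocks ℓ * Polynomial.C (cumProd K X ℓ)

/-- The subfamily `(X_j)_{j ∈ W}`, reindexed in increasing order by `Fin |W|`. -/
noncomputable def restrictFam {A : Type*} {n : ℕ} (X : Fin n → A) (W : Finset (Fin n)) :
    Fin W.card → A :=
  fun j => X (W.orderIsoOfFin rfl j)

section MonotoneCumulants

variable {A : Type*}

/-- The increasing enumeration of a nonempty `W`, indexed as the arguments of
`K (W.card - 1)` are. -/
noncomputable def blockIndex {n : ℕ} (W : Finset (Fin n)) (h : W.Nonempty) :
    Fin (W.card - 1 + 1) → Fin n :=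
  fun j => W.orderIsoOfFin rfl
    ⟨(j : ℕ), by have hj := j.isLt; have hc := Finset.card_pos.mpr h; omega⟩

lemma blockIndex_strictMono {n : ℕ} (W : Finset (Fin n)) (h : W.Nonempty) :
    StrictMono (blockIndex W h) := by
  intro a b hab
  exact (W.orderIsoOfFin rfl).strictMono (Fin.mk_lt_mk.mpr hab)

lemma mem_range_blockIndex {n : ℕ} (W : Finset (Fin n)) (h : W.Nonempty) (i : Fin n) :
    i ∈ Set.range (blockIndex W h) ↔ i ∈ W := by
  constructor
  · rintro ⟨j, rfl⟩
    exact ((W.orderIsoOfFin rfl) _).2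
  · intro hi
    obtain ⟨j, hj⟩ := (W.orderIsoOfFin rfl).surjective ⟨i, hi⟩
    refine ⟨⟨j, by have := j.isLt; omega⟩, ?_⟩
    change ((W.orderIsoOfFin rfl j : W) : Fin n) = i
    rw [hj]

section AddCommMonoid

variable [AddCommMonoid A] [Module ℂ A]
  (K : ∀ m : ℕ, MultilinearMap ℂ (fun _ : Fin (m + 1) => A) ℂ)

lemma blockApply_of_nonempty {n : ℕ} (X : Fin n → A) (W : Finset (Fin n)) (h : W.Nonempty) :
    blockApply K X W = K (W.card - 1) (X ∘ blockIndex W h) := by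
  rw [blockApply, dif_pos h]
  rfl

lemma blockApply_update_of_notMem {n : ℕ} (X : Fin n → A) (W : Finset (Fin n)) (i : Fin n)
    (hi : i ∉ W) (x : A) : blockApply K (Function.update X i x) W = blockApply K X W := by
  by_cases h : W.Nonempty
  · rw [blockApply_of_nonempty K _ W h, blockApply_of_nonempty K _ W h,
      Function.update_comp_eq_of_notMem_range]
    rwa [mem_range_blockIndex]
  · simp [blockApply, h]

lemma blockApply_update_of_mem {n : ℕ} (X : Fin n → A) (W : Finset (Fin n)) (i : Fin n)
    (hi : i ∈ W) : ∃ L : A →ₗ[ℂ] ℂ, ∀ x, blockApply K (Function.update X i x) W = L x := by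
  have h : W.Nonempty := ⟨i, hi⟩
  obtain ⟨j, rfl⟩ := (mem_range_blockIndex W h i).mpr hi
  refine ⟨(K (W.card - 1)).toLinearMap (X ∘ blockIndex W h) j, fun x => ?_⟩
  rw [blockApply_of_nonempty K _ W h,
    Function.update_comp_eq_of_injective _ (blockIndex_strictMono W h).injective,
    MultilinearMap.toLinearMap_apply]

/-- `K_π` is linear in each variable: the variable enters through one block only. -/
lemma cumProd_update {n : ℕ} (X : Fin n → A) (ℓ : Fin n → Fin n) (i : Fin n) :
    ∃ L : A →ₗ[ℂ] ℂ, ∀ x, cumProd K (Function.update X i x) ℓ = L x := by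
  obtain ⟨L, hL⟩ := blockApply_update_of_mem K X (labelBlock ℓ (ℓ i)) i (by simp [labelBlock])
  refine ⟨(∏ j ∈ (Finset.image ℓ Finset.univ).erase (ℓ i), blockApply K X (labelBlock ℓ j)) • L,
    fun x => ?_⟩
  rw [cumProd, ← Finset.prod_erase_mul _ _ (Finset.mem_image_of_mem ℓ (Finset.mem_univ i)), hL,
    LinearMap.smul_apply, smul_eq_mul]
  congr 1
  refine Finset.prod_congr rfl fun j hj => blockApply_update_of_notMem K X _ i ?_ x
  simpa [labelBlock, eq_comm] using Finset.ne_of_mem_erase hj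

/-- `K_π` as a multilinear functional. -/
noncomputable def cumProdMultilinear {n : ℕ} (ℓ : Fin n → Fin n) :
    MultilinearMap ℂ (fun _ : Fin n => A) ℂ where
  toFun X := cumProd K X ℓ
  map_update_add' {inst} X i x y := by
    obtain rfl : inst = _ := Subsingleton.elim _ (fun a b => instDecidableEqFin n a b)
    obtain ⟨L, hL⟩ := cumProd_update K X ℓ i
    simp only [hL, map_add]
  map_update_smul' {inst} X i c x := by
    obtain rfl : inst = _ := Subsingleton.elim _ (fun a b => instDecidableEqFin n a b)
    obtain ⟨L, hL⟩ := cumProd_update K X ℓ i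
    simp only [hL, map_smul]

lemma apply_comp_strictMono {m n : ℕ} (hmn : m = n) (X : Fin (n + 1) → A)
    (e : Fin (m + 1) → Fin (n + 1)) (he : StrictMono e) : K m (X ∘ e) = K n X := by
  subst hmn
  have hid : e = id := (he.range_inj strictMono_id).mp <| by
    rw [(Finite.injective_iff_surjective.mp he.injective).range_eq, Set.range_id]
  rw [hid, Function.comp_id]

lemma cumProd_const {n : ℕ} (X : Fin (n + 1) → A) : cumProd K X (fun _ => 0) = K n X := by
  have himg : Finset.image (fun _ : Fin (n + 1) => (0 : Fin (n + 1))) Finset.univ = {0} :=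
    Finset.image_const Finset.univ_nonempty 0
  have hblock : labelBlock (fun _ : Fin (n + 1) => (0 : Fin (n + 1))) 0 = Finset.univ := by
    simp [labelBlock]
  rw [cumProd, himg, Finset.prod_singleton, hblock,
    blockApply_of_nonempty K X _ Finset.univ_nonempty]
  exact apply_comp_strictMono K (by simp) X _ (blockIndex_strictMono _ _)

end AddCommMonoid

lemma const_mem_monotoneLabels (n : ℕ) :
    (fun _ : Fin (n + 1) => (0 : Fin (n + 1))) ∈ monotoneLabels (n + 1) := by
  simp only [monotoneLabels, Finset.mem_filter, Finset.mem_univ, true_and]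
  refine ⟨?_, fun _ _ _ _ _ _ _ _ _ => rfl, ?_⟩
  · rintro j k hkj ⟨i, rfl⟩
    exact ⟨i, (Fin.le_zero_iff.mp hkj).symm⟩
  · rintro u v ⟨_, rfl⟩ ⟨i, _, _, _, h⟩
    exact absurd (h i rfl).1 (lt_irrefl i)

/-- A monotone partition other than the one-block partition has only proper blocks. Labels
filling an initial segment are what excludes nonzero constant labelings. -/
lemma labelBlock_card_lt {n : ℕ} {ℓ : Fin (n + 1) → Fin (n + 1)}
    (hℓ : ℓ ∈ monotoneLabels (n + 1)) (hne : ℓ ≠ fun _ => 0) (j : Fin (n + 1)) :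
    (labelBlock ℓ j).card < n + 1 := by
  have hmono : IsMonotoneLabel ℓ := (Finset.mem_filter.mp hℓ).2
  by_contra hcard
  have huniv : labelBlock ℓ j = Finset.univ := by
    rw [← Finset.card_eq_iff_eq_univ, Fintype.card_fin]
    exact le_antisymm (by simpa using (labelBlock ℓ j).card_le_univ) (not_lt.mp hcard)
  have hconst : ∀ i, ℓ i = j := fun i => by
    have hi := Finset.mem_univ i
    rw [← huniv] at hi
    exact (Finset.mem_filter.mp hi).2
  obtain ⟨i, hi⟩ := hmono.1 j 0 (Fin.zero_le j) ⟨0, hconst 0⟩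
  exact hne (funext fun k => by rw [hconst k, ← hconst i, hi])

lemma cumProd_congr [AddCommMonoid A] [Module ℂ A]
    {K K' : ∀ m : ℕ, MultilinearMap ℂ (fun _ : Fin (m + 1) => A) ℂ} {n : ℕ}
    (hK : ∀ p < n, K p = K' p) (X : Fin (n + 1) → A) {ℓ : Fin (n + 1) → Fin (n + 1)}
    (hℓ : ℓ ∈ monotoneLabels (n + 1)) (hne : ℓ ≠ fun _ => 0) :
    cumProd K X ℓ = cumProd K' X ℓ := by
  refine Finset.prod_congr rfl fun j hj => ?_
  obtain ⟨i, -, rfl⟩ := Finset.mem_image.mp hj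
  have h : (labelBlock ℓ (ℓ i)).Nonempty := ⟨i, by simp [labelBlock]⟩
  have hlt := labelBlock_card_lt hℓ hne (ℓ i)
  have hpos := h.card_pos
  rw [blockApply_of_nonempty K X _ h, blockApply_of_nonempty K' X _ h, hK _ (by omega)]

variable [Ring A] [Algebra ℂ A]

/-- The right-hand side of the triangular recursion: the moment functional of order `n + 1`
minus the contribution of the monotone partitions with more than one block. -/
noncomputable def recursionRHS (φ : A →ₗ[ℂ] ℂ)
    (K : ∀ m : ℕ, MultilinearMap ℂ (fun _ : Fin (m + 1) => A) ℂ) (n : ℕ) :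
    MultilinearMap ℂ (fun _ : Fin (n + 1) => A) ℂ :=
  φ.compMultilinearMap (MultilinearMap.mkPiAlgebraFin ℂ (n + 1) A) -
    ∑ ℓ ∈ (monotoneLabels (n + 1)).erase (fun _ => 0),
      ((Nat.factorial (numBlocks ℓ) : ℂ))⁻¹ • cumProdMultilinear K ℓ

lemma recursionRHS_apply (φ : A →ₗ[ℂ] ℂ)
    (K : ∀ m : ℕ, MultilinearMap ℂ (fun _ : Fin (m + 1) => A) ℂ) (n : ℕ)
    (X : Fin (n + 1) → A) :
    recursionRHS φ K n X = φ ((List.ofFn X).prod) -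
      ∑ ℓ ∈ (monotoneLabels (n + 1)).erase (fun _ => 0),
        ((Nat.factorial (numBlocks ℓ) : ℂ))⁻¹ * cumProd K X ℓ := by
  simp only [recursionRHS, sub_apply, sum_apply,
    smul_apply, LinearMap.compMultilinearMap_apply,
    MultilinearMap.mkPiAlgebraFin_apply, smul_eq_mul]
  rfl

lemma recursionRHS_congr (φ : A →ₗ[ℂ] ℂ)
    {K K' : ∀ m : ℕ, MultilinearMap ℂ (fun _ : Fin (m + 1) => A) ℂ} {n : ℕ}
    (hK : ∀ p < n, K p = K' p) : recursionRHS φ K n = recursionRHS φ K' n := by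
  ext X
  rw [recursionRHS_apply, recursionRHS_apply]
  congr 1
  refine Finset.sum_congr rfl fun ℓ hℓ => ?_
  rw [cumProd_congr hK X (Finset.mem_of_mem_erase hℓ) (Finset.ne_of_mem_erase hℓ)]

/-- Splitting off the one-block partition turns the moment–cumulant formula into the
triangular recursion. -/
lemma momentFormula_iff (φ : A →ₗ[ℂ] ℂ)
    (K : ∀ m : ℕ, MultilinearMap ℂ (fun _ : Fin (m + 1) => A) ℂ) :
    (∀ (n : ℕ) (X : Fin (n + 1) → A),
        φ ((List.ofFn X).prod) =
          ∑ ℓ ∈ monotoneLabels (n + 1),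
            ((Nat.factorial (numBlocks ℓ) : ℂ))⁻¹ * cumProd K X ℓ) ↔
      ∀ n, K n = recursionRHS φ K n := by
  refine forall_congr' fun n => ?_
  rw [MultilinearMap.ext_iff]
  refine forall_congr' fun X => ?_
  have hone : numBlocks (fun _ : Fin (n + 1) => (0 : Fin (n + 1))) = 1 := by
    rw [numBlocks, Finset.image_const Finset.univ_nonempty, Finset.card_singleton]
  rw [recursionRHS_apply, ← Finset.add_sum_erase _ _ (const_mem_monotoneLabels n), hone,
    cumProd_const, Nat.factorial_one, Nat.cast_one, inv_one, one_mul, eq_sub_iff_add_eq, eq_comm]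

/-- The monotone cumulants, defined by the triangular recursion; the orders not yet defined are
filled with `0`, which does not affect the result. -/
noncomputable def monotoneCumulant (φ : A →ₗ[ℂ] ℂ) (n : ℕ) :
    MultilinearMap ℂ (fun _ : Fin (n + 1) => A) ℂ :=
  recursionRHS φ (fun p => if _ : p < n then monotoneCumulant φ p else 0) n

lemma monotoneCumulant_eq (φ : A →ₗ[ℂ] ℂ) (n : ℕ) :
    monotoneCumulant φ n = recursionRHS φ (monotoneCumulant φ) n := by
  rw [monotoneCumulant]
  exact recursionRHS_congr φ fun p hp => dif_pos hp

end MonotoneCumulants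

/-- Monotone moment–cumulant formula: for an algebraic probability space `(A, φ)` there is
a unique family of multilinear functionals `K_n^M : Aⁿ → ℂ` (`n ≥ 1`; here `K m` is the
`(m+1)`-linear one) such that
`φ(X₁ ⋯ Xₙ) = Σ_{(π,λ) ∈ M(n)} (1/|π|!) K_π^M(X₁, …, Xₙ)` for all `n ≥ 1`. -/
theorem monotone_moment_cumulant_formula {A : Type*} [Ring A] [Algebra ℂ A]
    (φ : A →ₗ[ℂ] ℂ) (hφ : φ 1 = 1) :
    ∃! K : ∀ m : ℕ, MultilinearMap ℂ (fun _ : Fin (m + 1) => A) ℂ,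
      ∀ (n : ℕ) (X : Fin (n + 1) → A),
        φ ((List.ofFn X).prod) =
          ∑ ℓ ∈ monotoneLabels (n + 1),
            ((Nat.factorial (numBlocks ℓ) : ℂ))⁻¹ * cumProd K X ℓ := by
  refine ⟨monotoneCumulant φ, (momentFormula_iff φ _).mpr (monotoneCumulant_eq φ), fun K hK => ?_⟩
  replace hK := (momentFormula_iff φ K).mp hK
  funext n
  induction n using Nat.strong_induction_on with
  | _ n ih => rw [hK n, monotoneCumulant_eq φ n, recursionRHS_congr φ ih]
end

section
/- Let A be a ℂ-vector space, let K_p : A^p → ℂ (p ≥ 1) be multilinear functionals, and let φ_t be defined from them by the monotone partition formula. Then for every n ≥ 1 and all X₁, ..., Xₙ ∈ A, (d/dt) φ_t(X₁, ..., Xₙ) = Σ_{V ∈ IB(n)} K_{|V|}(X_V) · φ_t(X_{V^c}) as an identity of polynomials in t, where V^c = {1,...,n} ∖ V and φ_t applied to the empty family is 1. -/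
/-!
In a monotone partition of a nonempty set, the block `V` carrying the largest label is an interval:
if `i < k < j` with `i, j ∈ V` and `k ∉ V`, then non-crossing traps the block of `k` strictly
between `i` and `j`, so that block is nested in `V` and would need a larger label
(`isIntervalBlock_top`). Deleting `V` leaves a monotone partition of `Vᶜ`; conversely, adding an
interval `V` as the new largest block to a monotone partition of `Vᶜ` creates neither a crossing
nor a violation of the order. Hence monotone partitions of `{1, …, n}` correspond to pairs of an
interval block `V` and a monotone partition of `Vᶜ` (`extendLabel_isMonotone`,
`extendLabel_injective`, `exists_extendLabel_eq`). Under this correspondence the number of blocks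
drops by one and the factor `K_{|V|}(X_V)` splits off (`numBlocks_extendLabel`,
`cumProd_extendLabel`), and `(t ^ (N + 1) / (N + 1)!)' = t ^ N / N!` gives the recurrence.
-/

open scoped Classical

/-! ### Adding a block to a labeling of its complement -/

/-- The increasing enumeration of the complement of `V`. -/
noncomputable def complEmb {n : ℕ} (V : Finset (Fin n)) : Fin Vᶜ.card ↪o Fin n :=
  Vᶜ.orderEmbOfFin rfl

theorem complEmb_notMem {n : ℕ} (V : Finset (Fin n)) (j : Fin Vᶜ.card) : complEmb V j ∉ V := by
  have := Finset.orderEmbOfFin_mem Vᶜ rfl j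
  exact Finset.mem_compl.1 this

theorem exists_complEmb {n : ℕ} {V : Finset (Fin n)} {i : Fin n} (h : i ∉ V) :
    ∃ j, complEmb V j = i := by
  have := Finset.range_orderEmbOfFin Vᶜ rfl
  have hi : i ∈ Set.range (Vᶜ.orderEmbOfFin rfl) := by rw [this]; simpa using h
  exact hi

/-- Add `V` as the block with the largest label to a labeling of `Vᶜ` that uses exactly the labels
`0, …, N - 1`, where `N` is its number of blocks. The new label is `N`; the truncation at `n - 1`
only serves to make the definition total and is inactive for nonempty `V`. -/
noncomputable def extendLabel {n : ℕ} (V : Finset (Fin n)) (ℓ : Fin Vᶜ.card → Fin Vᶜ.card) :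
    Fin n → Fin n := fun i =>
  if h : i ∈ V then ⟨min (numBlocks ℓ) (n - 1), by have := i.isLt; omega⟩
  else Fin.castLE (by simpa using Finset.card_le_univ Vᶜ) (ℓ (exists_complEmb h).choose)

theorem numBlocks_le {n : ℕ} (ℓ : Fin n → Fin n) : numBlocks ℓ ≤ n := by
  simpa [numBlocks] using Finset.card_le_univ (Finset.image ℓ Finset.univ)

theorem card_compl_lt {n : ℕ} {V : Finset (Fin n)} (hV : V.Nonempty) : Vᶜ.card < n := by
  have h1 := Finset.card_pos.mpr hV
  have h2 := Finset.card_compl_add_card V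
  simp only [Fintype.card_fin] at h2
  omega

theorem extendLabel_mem {n : ℕ} {V : Finset (Fin n)} (ℓ : Fin Vᶜ.card → Fin Vᶜ.card)
    {i : Fin n} (h : i ∈ V) : (extendLabel V ℓ i : ℕ) = numBlocks ℓ := by
  have h1 := numBlocks_le ℓ
  have h2 := card_compl_lt ⟨i, h⟩
  simp only [extendLabel, h, dif_pos]
  omega

theorem extendLabel_complEmb {n : ℕ} {V : Finset (Fin n)} (ℓ : Fin Vᶜ.card → Fin Vᶜ.card)
    (j : Fin Vᶜ.card) : (extendLabel V ℓ (complEmb V j) : ℕ) = ℓ j := by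
  have h := complEmb_notMem V j
  have h2 := (exists_complEmb h).choose_spec
  simp only [extendLabel, h, dif_neg, not_false_eq_true, Fin.val_castLE]
  rw [(complEmb V).injective h2]

/-! ### Labels of a monotone partition -/

/-- If the labels in use form an initial segment, they are exactly those below the number of blocks. -/
theorem exists_label_iff {n : ℕ} {ℓ : Fin n → Fin n}
    (h : ∀ j k : Fin n, k ≤ j → (∃ i, ℓ i = j) → ∃ i, ℓ i = k) (j : Fin n) :
    (∃ i, ℓ i = j) ↔ (j : ℕ) < numBlocks ℓ := by
  constructor
  · intro hj
    have : Finset.Iic j ⊆ Finset.image ℓ Finset.univ := by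
      intro k hk
      simpa using h j k (by simpa using hk) hj
    have := Finset.card_le_card this
    rw [Fin.card_Iic] at this
    exact this
  · intro hj
    by_contra hne
    have : Finset.image ℓ Finset.univ ⊆ Finset.Iio j := by
      intro k hk
      rw [Finset.mem_Iio]
      by_contra hlt
      exact hne (h k j (not_lt.mp hlt) (by simpa using hk))
    have := Finset.card_le_card this
    rw [Fin.card_Iio] at this
    unfold numBlocks at hj
    omega

theorem numBlocks_eq {n N : ℕ} {ℓ : Fin n → Fin n} (hN : N ≤ n)
    (h : ∀ k : Fin n, (∃ i, ℓ i = k) ↔ (k : ℕ) < N) : numBlocks ℓ = N := by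
  have h1 : ∀ j k : Fin n, k ≤ j → (∃ i, ℓ i = j) → ∃ i, ℓ i = k := by
    intro j k hkj hj
    rw [h] at hj ⊢
    exact lt_of_le_of_lt hkj hj
  have h2 := numBlocks_le ℓ
  rcases lt_trichotomy (numBlocks ℓ) N with hlt | heq | hgt
  · have := (h ⟨numBlocks ℓ, by omega⟩).2 hlt
    rw [exists_label_iff h1] at this
    simp at this
  · exact heq
  · have := (exists_label_iff h1 ⟨N, by omega⟩).2 hgt
    rw [h] at this
    simp at this

theorem label_lt {n : ℕ} {ℓ : Fin n → Fin n} (h : IsMonotoneLabel ℓ) (j : Fin n) :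
    (ℓ j : ℕ) < numBlocks ℓ := (exists_label_iff h.1 _).1 ⟨j, rfl⟩

/-! ### Adding an interval as the largest block -/

section Extend

variable {n : ℕ} {V : Finset (Fin n)} {ℓ : Fin Vᶜ.card → Fin Vᶜ.card}

theorem mem_iff_extendLabel (h : IsMonotoneLabel ℓ) (i : Fin n) :
    i ∈ V ↔ (extendLabel V ℓ i : ℕ) = numBlocks ℓ := by
  refine ⟨extendLabel_mem ℓ, fun hi => ?_⟩
  by_contra hV
  obtain ⟨j, rfl⟩ := exists_complEmb hV
  rw [extendLabel_complEmb] at hi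
  have := label_lt h j
  omega

theorem extendLabel_le (h : IsMonotoneLabel ℓ) (i : Fin n) :
    (extendLabel V ℓ i : ℕ) ≤ numBlocks ℓ := by
  by_cases hV : i ∈ V
  · exact (extendLabel_mem ℓ hV).le
  · obtain ⟨j, rfl⟩ := exists_complEmb hV
    rw [extendLabel_complEmb]
    exact (label_lt h j).le

theorem exists_extendLabel_iff (h : IsMonotoneLabel ℓ) (hV : V.Nonempty) (k : Fin n) :
    (∃ i, extendLabel V ℓ i = k) ↔ (k : ℕ) < numBlocks ℓ + 1 := by
  constructor
  · rintro ⟨i, rfl⟩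
    exact Nat.lt_succ_of_le (extendLabel_le h i)
  · intro hk
    rcases Nat.lt_succ_iff_lt_or_eq.mp hk with hlt | heq
    · have := numBlocks_le ℓ
      obtain ⟨j, hj⟩ := (exists_label_iff h.1 ⟨k, by omega⟩).2 hlt
      refine ⟨complEmb V j, Fin.ext ?_⟩
      rw [extendLabel_complEmb, hj]
    · obtain ⟨i, hi⟩ := hV
      exact ⟨i, Fin.ext (by rw [extendLabel_mem ℓ hi, heq])⟩

theorem numBlocks_extendLabel (h : IsMonotoneLabel ℓ) (hV : V.Nonempty) :
    numBlocks (extendLabel V ℓ) = numBlocks ℓ + 1 := by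
  have h1 := numBlocks_le ℓ
  have h2 := card_compl_lt hV
  exact numBlocks_eq (by omega) (exists_extendLabel_iff h hV)

theorem extendLabel_isMonotone (h : IsMonotoneLabel ℓ) (hV : IsIntervalBlock V) :
    IsMonotoneLabel (extendLabel V ℓ) := by
  have hconv : ∀ a b c : Fin n, a ∈ V → c ∈ V → a < b → b < c → b ∈ V := by
    obtain ⟨-, p, q, rfl⟩ := hV
    intro a b c ha hc hab hbc
    rw [Finset.mem_Icc] at *
    exact ⟨ha.1.trans hab.le, hbc.le.trans hc.2⟩
  have hsame : ∀ {a b : Fin n}, extendLabel V ℓ a = extendLabel V ℓ b → (a ∈ V ↔ b ∈ V) := by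
    intro a b hab
    rw [mem_iff_extendLabel h, mem_iff_extendLabel h, hab]
  have hval : ∀ {a b}, extendLabel V ℓ (complEmb V a) = extendLabel V ℓ (complEmb V b) ↔
      ℓ a = ℓ b := by
    intro a b
    rw [Fin.ext_iff, Fin.ext_iff, extendLabel_complEmb, extendLabel_complEmb]
  refine ⟨?_, ?_, ?_⟩
  · intro j k hkj hj
    rw [exists_extendLabel_iff h hV.1] at hj ⊢
    exact lt_of_le_of_lt hkj hj
  · intro a b c d hab hbc hcd hac hbd
    by_cases ha : a ∈ V
    · have hb := hconv a b c ha ((hsame hac).1 ha) hab hbc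
      exact Fin.ext (by rw [extendLabel_mem ℓ ha, extendLabel_mem ℓ hb])
    · by_cases hb : b ∈ V
      · exact absurd ((hsame hac).2 (hconv b c d hb ((hsame hbd).1 hb) hbc hcd)) ha
      · have hc : c ∉ V := fun hc => ha ((hsame hac).2 hc)
        have hd : d ∉ V := fun hd => hb ((hsame hbd).2 hd)
        obtain ⟨a, rfl⟩ := exists_complEmb ha
        obtain ⟨b, rfl⟩ := exists_complEmb hb
        obtain ⟨c, rfl⟩ := exists_complEmb hc
        obtain ⟨d, rfl⟩ := exists_complEmb hd
        rw [hval] at *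
        rw [OrderEmbedding.lt_iff_lt] at *
        exact h.2.1 a b c d hab hbc hcd hac hbd
  · rintro u v ⟨x, rfl⟩ ⟨i, j, rfl, hj, hk⟩
    have hx := hk x rfl
    by_cases hi : i ∈ V
    · have hxV := hconv i x j hi ((hsame hj).2 hi) hx.1 hx.2
      have := hk i (Fin.ext (by rw [extendLabel_mem ℓ hi, extendLabel_mem ℓ hxV]))
      exact absurd this.1 (lt_irrefl _)
    · by_cases hxV : x ∈ V
      · rw [Fin.lt_def, extendLabel_mem ℓ hxV]
        refine lt_of_le_of_ne (extendLabel_le h i) fun he => hi ((mem_iff_extendLabel h i).2 he)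
      · have hjV : j ∉ V := fun hh => hi ((hsame hj).1 hh)
        obtain ⟨i, rfl⟩ := exists_complEmb hi
        obtain ⟨j, rfl⟩ := exists_complEmb hjV
        obtain ⟨x, rfl⟩ := exists_complEmb hxV
        rw [Fin.lt_def, extendLabel_complEmb, extendLabel_complEmb]
        refine h.2.2 (ℓ x) (ℓ i) ⟨x, rfl⟩ ⟨i, j, rfl, hval.1 hj, fun k hkx => ?_⟩
        have := hk (complEmb V k) (hval.2 hkx)
        simpa using this

end Extend

theorem extendLabel_injective {n : ℕ} {V W : Finset (Fin n)} {ℓ : Fin Vᶜ.card → Fin Vᶜ.card}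
    {m : Fin Wᶜ.card → Fin Wᶜ.card} (hV : V.Nonempty) (hW : W.Nonempty)
    (hℓ : IsMonotoneLabel ℓ) (hm : IsMonotoneLabel m) (h : extendLabel V ℓ = extendLabel W m) :
    (⟨V, ℓ⟩ : (V : Finset (Fin n)) × (Fin Vᶜ.card → Fin Vᶜ.card)) = ⟨W, m⟩ := by
  have hN : numBlocks ℓ = numBlocks m := by
    have h1 := numBlocks_extendLabel hℓ hV
    have h2 := numBlocks_extendLabel hm hW
    rw [h] at h1
    omega
  obtain rfl : V = W := by
    ext i
    rw [mem_iff_extendLabel hℓ, mem_iff_extendLabel hm, h, hN]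
  congr 1
  funext j
  apply Fin.ext
  rw [← extendLabel_complEmb ℓ, ← extendLabel_complEmb m, h]

/-! ### Removing the largest block -/

/-- The block with the largest label of a monotone partition is an interval. -/
theorem isIntervalBlock_top {n : ℕ} {ℓ : Fin n → Fin n} (h : IsMonotoneLabel ℓ) {v : Fin n}
    (hv : ∃ i, ℓ i = v) (hmax : ∀ i, ℓ i ≤ v) : IsIntervalBlock (labelBlock ℓ v) := by
  have hmem : ∀ i, i ∈ labelBlock ℓ v ↔ ℓ i = v := by simp [labelBlock]
  have hne : (labelBlock ℓ v).Nonempty := by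
    obtain ⟨i, hi⟩ := hv
    exact ⟨i, (hmem i).2 hi⟩
  refine ⟨hne, (labelBlock ℓ v).min' hne, (labelBlock ℓ v).max' hne, ?_⟩
  have ha := (hmem _).1 ((labelBlock ℓ v).min'_mem hne)
  have hb := (hmem _).1 ((labelBlock ℓ v).max'_mem hne)
  ext k
  rw [Finset.mem_Icc]
  refine ⟨fun hk => ⟨Finset.min'_le _ _ hk, Finset.le_max' _ _ hk⟩, fun hk => ?_⟩
  rw [hmem]
  generalize (labelBlock ℓ v).min' hne = a at *
  generalize (labelBlock ℓ v).max' hne = b at *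
  by_contra hkv
  have hak : a < k := lt_of_le_of_ne hk.1 (by rintro rfl; exact hkv ha)
  have hkb : k < b := lt_of_le_of_ne hk.2 (by rintro rfl; exact hkv hb)
  refine absurd (h.2.2 (ℓ k) v ⟨k, rfl⟩ ⟨a, b, ha, hb, fun m hm => ?_⟩) (not_lt.2 (hmax k))
  have hmv : ℓ m ≠ v := by rwa [hm]
  constructor
  · by_contra hma
    have hlt : m < a := lt_of_le_of_ne (not_lt.1 hma) (by rintro rfl; exact hmv ha)
    exact hmv ((h.2.1 m a k b hlt hak hkb hm (ha.trans hb.symm)).trans ha)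
  · by_contra hmb
    have hlt : b < m := lt_of_le_of_ne (not_lt.1 hmb) (by rintro rfl; exact hmv hb)
    exact hkv ((h.2.1 a k b m hak hkb hlt (ha.trans hb.symm) hm.symm).symm.trans ha)

/-- Every monotone partition of a nonempty set arises by adding its largest block to a monotone
partition of the complement of that block. -/
theorem exists_extendLabel_eq {n : ℕ} (hn : 1 ≤ n) {L : Fin n → Fin n} (h : IsMonotoneLabel L) :
    ∃ (V : Finset (Fin n)) (ℓ : Fin Vᶜ.card → Fin Vᶜ.card),
      IsIntervalBlock V ∧ IsMonotoneLabel ℓ ∧ extendLabel V ℓ = L := by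
  have hpos : 0 < numBlocks L := Nat.zero_lt_of_lt (label_lt h ⟨0, hn⟩)
  have hle := numBlocks_le L
  obtain ⟨N, hN⟩ : ∃ N, numBlocks L = N + 1 := ⟨numBlocks L - 1, by omega⟩
  set v : Fin n := ⟨N, by omega⟩ with hv
  have hmax : ∀ i, L i ≤ v := fun i => by
    have := label_lt h i
    rw [Fin.le_def]; simp only [hv]; omega
  have hvex : ∃ i, L i = v := (exists_label_iff h.1 v).2 (by simp [hv, hN])
  have hmem : ∀ i, i ∈ labelBlock L v ↔ L i = v := by simp [labelBlock]
  have hint := isIntervalBlock_top h hvex hmax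
  generalize labelBlock L v = V at *
  have hlt : ∀ j, (L (complEmb V j) : ℕ) < N := by
    intro j
    have h1 := complEmb_notMem V j
    rw [hmem] at h1
    exact lt_of_le_of_ne (hmax (complEmb V j)) fun he => h1 (Fin.ext he)
  have hex : ∀ k : Fin n, (k : ℕ) < N → ∃ j, L (complEmb V j) = k := by
    intro k hk
    obtain ⟨i, rfl⟩ := (exists_label_iff h.1 k).2 (by omega)
    have hi : i ∉ V := by
      rw [hmem]
      intro hi
      rw [hi] at hk
      simp [hv] at hk
    obtain ⟨j, rfl⟩ := exists_complEmb hi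
    exact ⟨j, rfl⟩
  -- The `N` smaller labels all occur on `Vᶜ`, so they fit into `Fin Vᶜ.card`.
  have hNc : N ≤ Vᶜ.card := by
    have hsub : Finset.Iio v ⊆ Finset.univ.image (fun j => L (complEmb V j)) := by
      intro k hk
      obtain ⟨j, hj⟩ := hex k (Fin.lt_def.1 (Finset.mem_Iio.1 hk))
      exact Finset.mem_image.2 ⟨j, Finset.mem_univ _, hj⟩
    have h1 := Finset.card_le_card hsub
    have h2 := Finset.card_image_le (s := Finset.univ) (f := fun j => L (complEmb V j))
    rw [Fin.card_Iio] at h1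
    rw [Finset.card_univ, Fintype.card_fin] at h2
    exact h1.trans h2
  let ℓ : Fin Vᶜ.card → Fin Vᶜ.card := fun j => ⟨L (complEmb V j), (hlt j).trans_le hNc⟩
  have hℓ : ∀ {a b}, ℓ a = ℓ b ↔ L (complEmb V a) = L (complEmb V b) := by
    intro a b
    simp [ℓ, Fin.ext_iff]
  have hused : ∀ k : Fin Vᶜ.card, (∃ i, ℓ i = k) ↔ (k : ℕ) < N := by
    intro k
    constructor
    · rintro ⟨j, rfl⟩
      exact hlt j
    · intro hk
      obtain ⟨j, hj⟩ := hex ⟨k, by omega⟩ hk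
      exact ⟨j, Fin.ext (by simp [ℓ, hj])⟩
  have hnum := numBlocks_eq hNc hused
  refine ⟨V, ℓ, hint, ⟨?_, ?_, ?_⟩, ?_⟩
  · intro j k hkj hj
    rw [hused] at hj ⊢
    exact lt_of_le_of_lt hkj hj
  · intro a b c d hab hbc hcd hac hbd
    rw [hℓ] at *
    exact h.2.1 _ _ _ _ ((complEmb V).lt_iff_lt.2 hab) ((complEmb V).lt_iff_lt.2 hbc)
      ((complEmb V).lt_iff_lt.2 hcd) hac hbd
  · rintro u w ⟨x, rfl⟩ ⟨i, j, rfl, hj, hk⟩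
    rw [Fin.lt_def]
    refine h.2.2 (L (complEmb V x)) (L (complEmb V i)) ⟨_, rfl⟩
      ⟨complEmb V i, complEmb V j, rfl, hℓ.1 hj, fun k hkx => ?_⟩
    -- `k` lies in the block of a point outside `V`, hence itself outside `V`.
    have hkV : k ∉ V := by
      rw [hmem, hkx, ← hmem]
      exact complEmb_notMem V x
    obtain ⟨k, rfl⟩ := exists_complEmb hkV
    simpa using hk k (hℓ.2 hkx)
  · funext i
    apply Fin.ext
    by_cases hi : i ∈ V
    · rw [extendLabel_mem ℓ hi, hnum, (hmem i).1 hi]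
    · obtain ⟨j, rfl⟩ := exists_complEmb hi
      rw [extendLabel_complEmb]

/-! ### Multiplicativity of the cumulant product -/

section Functional

variable {A : Type*} [AddCommMonoid A] [Module ℂ A]
  (K : ∀ m : ℕ, MultilinearMap ℂ (fun _ : Fin (m + 1) => A) ℂ)

/-- `blockApply` may be computed with any increasing enumeration of the block, whatever the form
in which its cardinality is given. -/
theorem blockApply_eq {n m : ℕ} (X : Fin n → A) (W : Finset (Fin n)) (hW : W.card = m + 1)
    (f : Fin (m + 1) → Fin n) (hf : StrictMono f) (hfW : ∀ j, f j ∈ W) :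
    blockApply K X W = K m (fun j => X (f j)) := by
  have hne : W.Nonempty := Finset.card_pos.1 (by omega)
  obtain rfl : m = W.card - 1 := by omega
  rw [blockApply, dif_pos hne]
  congr 1
  funext j
  rw [Finset.orderEmbOfFin_unique hW hfW hf, Finset.coe_orderIsoOfFin_apply]
  congr 1

theorem blockApply_map {m n : ℕ} (X : Fin n → A) (e : Fin m ↪o Fin n) (W : Finset (Fin m)) :
    blockApply K X (W.map e.toEmbedding) = blockApply K (fun j => X (e j)) W := by
  rcases W.eq_empty_or_nonempty with rfl | hW
  · simp [blockApply]
  · have hc : W.card = W.card - 1 + 1 := by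
      have := Finset.card_pos.2 hW
      omega
    rw [blockApply_eq K (fun j => X (e j)) W hc (W.orderEmbOfFin hc) (OrderEmbedding.strictMono _)
      (Finset.orderEmbOfFin_mem W hc)]
    refine blockApply_eq K X _ (by rw [Finset.card_map, ← hc])
      (fun j => e (W.orderEmbOfFin hc j)) (e.strictMono.comp (OrderEmbedding.strictMono _)) ?_
    intro j
    exact Finset.mem_map_of_mem e.toEmbedding (Finset.orderEmbOfFin_mem W hc j)

theorem cumProd_extendLabel {n : ℕ} (X : Fin n → A) {V : Finset (Fin n)} (hV : V.Nonempty)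
    {ℓ : Fin Vᶜ.card → Fin Vᶜ.card} (h : IsMonotoneLabel ℓ) :
    cumProd K X (extendLabel V ℓ) = blockApply K X V * cumProd K (restrictFam X Vᶜ) ℓ := by
  have hlt := card_compl_lt hV
  have hle := numBlocks_le ℓ
  set v : Fin n := ⟨numBlocks ℓ, by omega⟩ with hv
  let c : Fin Vᶜ.card ↪ Fin n := (Fin.castLEOrderEmb hlt.le).toEmbedding
  have hc : ∀ k, ((c k : Fin n) : ℕ) = k := fun k => rfl
  have hvm : v ∉ (Finset.image ℓ Finset.univ).map c := by
    rw [Finset.mem_map]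
    rintro ⟨k, hk, hkv⟩
    obtain ⟨j, -, rfl⟩ := Finset.mem_image.1 hk
    have h1 := label_lt h j
    have h2 := congrArg Fin.val hkv
    rw [hc] at h2
    simp only [hv] at h2
    omega
  have himg : Finset.image (extendLabel V ℓ) Finset.univ =
      insert v ((Finset.image ℓ Finset.univ).map c) := by
    ext k
    rw [Finset.mem_insert, Finset.mem_map, Finset.mem_image]
    constructor
    · rintro ⟨i, -, rfl⟩
      by_cases hi : i ∈ V
      · exact Or.inl (Fin.ext (extendLabel_mem ℓ hi))
      · obtain ⟨j, rfl⟩ := exists_complEmb hi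
        exact Or.inr ⟨ℓ j, Finset.mem_image_of_mem _ (Finset.mem_univ _),
          Fin.ext (by rw [hc, extendLabel_complEmb])⟩
    · rintro (rfl | ⟨k, hk, rfl⟩)
      · obtain ⟨i, hi⟩ := hV
        exact ⟨i, Finset.mem_univ _, Fin.ext (extendLabel_mem ℓ hi)⟩
      · obtain ⟨j, -, rfl⟩ := Finset.mem_image.1 hk
        exact ⟨complEmb V j, Finset.mem_univ _, Fin.ext (by rw [hc, extendLabel_complEmb])⟩
  have htop : labelBlock (extendLabel V ℓ) v = V := by
    ext i
    rw [mem_iff_extendLabel h]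
    simp [labelBlock, Fin.ext_iff, hv]
  have hlow : ∀ k ∈ Finset.image ℓ Finset.univ, labelBlock (extendLabel V ℓ) (c k) =
      (labelBlock ℓ k).map (complEmb V).toEmbedding := by
    intro k hk
    obtain ⟨j, -, rfl⟩ := Finset.mem_image.1 hk
    ext i
    simp only [labelBlock, Finset.mem_filter, Finset.mem_univ, true_and, Finset.mem_map]
    constructor
    · intro hi
      have hiV : i ∉ V := by
        rw [mem_iff_extendLabel h, hi, hc]
        exact (label_lt h j).ne
      obtain ⟨a, rfl⟩ := exists_complEmb hiV
      refine ⟨a, Fin.ext ?_, rfl⟩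
      rw [← extendLabel_complEmb, hi, hc]
    · rintro ⟨a, ha, rfl⟩
      apply Fin.ext
      rw [hc, ← ha]
      exact extendLabel_complEmb ℓ a
  rw [cumProd, himg, Finset.prod_insert hvm, htop, Finset.prod_map, cumProd]
  congr 1
  refine Finset.prod_congr rfl fun k hk => ?_
  rw [hlow k hk, blockApply_map]
  rfl

end Functional

/-! ### The recurrence -/

/-- Recurrence (2): `(d/dt) φ_t(X₁, …, Xₙ) = Σ_{V ∈ IB(n)} K_{|V|}(X_V) φ_t(X_{V^c})`
as an identity of polynomials in `t`. -/
theorem phiPoly_derivative_intervalBlocks {A : Type*} [AddCommMonoid A] [Module ℂ A]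
    (K : ∀ m : ℕ, MultilinearMap ℂ (fun _ : Fin (m + 1) => A) ℂ)
    {n : ℕ} (hn : 1 ≤ n) (X : Fin n → A) :
    Polynomial.derivative (phiPoly K X) =
      ∑ V ∈ Finset.univ.filter (fun V : Finset (Fin n) => IsIntervalBlock V),
        Polynomial.C (blockApply K X V) * phiPoly K (restrictFam X Vᶜ) := by
  simp only [phiPoly, Finset.mul_sum]
  rw [Polynomial.derivative_sum, Finset.sum_sigma']
  symm
  refine Finset.sum_bij (fun p _ => extendLabel p.1 p.2) ?_ ?_ ?_ ?_
  · rintro ⟨V, ℓ⟩ hp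
    simp only [Finset.mem_sigma, Finset.mem_filter, Finset.mem_univ, true_and,
      monotoneLabels] at hp ⊢
    exact extendLabel_isMonotone hp.2 hp.1
  · rintro ⟨V, ℓ⟩ hp ⟨W, m⟩ hq heq
    simp only [Finset.mem_sigma, Finset.mem_filter, Finset.mem_univ, true_and,
      monotoneLabels] at hp hq
    exact extendLabel_injective hp.1.1 hq.1.1 hp.2 hq.2 heq
  · intro L hL
    simp only [Finset.mem_filter, Finset.mem_univ, true_and, monotoneLabels] at hL
    obtain ⟨V, ℓ, hV, hℓ, rfl⟩ := exists_extendLabel_eq hn hL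
    refine ⟨⟨V, ℓ⟩, ?_, rfl⟩
    simp only [Finset.mem_sigma, Finset.mem_filter, Finset.mem_univ, true_and, monotoneLabels]
    exact ⟨hV, hℓ⟩
  · rintro ⟨V, ℓ⟩ hp
    simp only [Finset.mem_sigma, Finset.mem_filter, Finset.mem_univ, true_and,
      monotoneLabels] at hp
    simp only
    rw [numBlocks_extendLabel hp.2 hp.1.1, cumProd_extendLabel K X hp.1.1 hp.2]
    generalize numBlocks ℓ = N
    have hfac : ((N.factorial : ℂ))⁻¹ = (((N + 1).factorial : ℂ))⁻¹ * ((N : ℂ) + 1) := by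
      have h1 : (N.factorial : ℂ) ≠ 0 := by exact_mod_cast N.factorial_ne_zero
      have h2 : (N : ℂ) + 1 ≠ 0 := by exact_mod_cast N.succ_ne_zero
      rw [Nat.factorial_succ]
      push_cast
      field_simp
    rw [hfac, Polynomial.derivative_mul, Polynomial.derivative_C, mul_zero, add_zero,
      Polynomial.derivative_C_mul_X_pow]
    simp only [map_mul, Nat.add_sub_cancel, Nat.cast_add, Nat.cast_one]
    ring
end
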